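/- arXiv:1407.4897 — 3 statements merged into one kernel-verified Lean document; each statement's English description precedes it below -/
import Mathlib

section
/- The minimal diameter of an admissible 50-tuple is 246, the minimal diameter of an admissible 51-tuple is 252, and the minimal diameter of an admissible 54-tuple is 270. -/
/-- A `k`-tuple of increasing integers is admissible if for every prime `p`
its entries do not occupy all residue classes modulo `p`. -/
def Admissible {k : ℕ} (h : Fin k → ℤ) : Prop :=
  StrictMono h ∧ ∀ p : ℕ, p.Prime → ∃ a : ZMod p, ∀ i, (h i : ZMod p) ≠ a

/-- Byte mask of the multiples of `p` below `n`. -/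
def mMask (n p : ℕ) : ℕ :=
  Nat.div (Nat.sub (Nat.pow 2 (Nat.mul (Nat.mul 8 p) (Nat.add (Nat.div n p) 1))) 1)
    (Nat.sub (Nat.pow 2 (Nat.mul 8 p)) 1)

def fullMask (n : ℕ) : ℕ :=
  Nat.div (Nat.sub (Nat.pow 2 (Nat.mul 8 n)) 1) 255

/-- keep the positions not congruent to `r`. -/
def keepMask (F M r : ℕ) : ℕ := Nat.xor F (Nat.land F (Nat.shiftLeft M (Nat.mul 8 r)))

def srch (k F : ℕ) : List (ℕ × ℕ) → ℕ → Bool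
  | [], _ => false
  | q :: ps, S => (List.range q.1).all fun r =>
      Bool.or (!(Nat.ble k (Nat.mod (Nat.land S (keepMask F q.2 r)) 255)))
        (srch k F ps (Nat.land S (keepMask F q.2 r)))

def goodMasks (n F : ℕ) (ps : List (ℕ × ℕ)) : Bool :=
  ps.all fun q => (List.range q.1).all fun r => (List.range n).all fun i =>
    Bool.or (Nat.beq (Nat.mod i q.1) r)
      (Nat.beq (Nat.land (Nat.shiftRight (keepMask F q.2 r) (Nat.mul 8 i)) 1) 1)

def pList (n : ℕ) : List (ℕ × ℕ) := [3, 5, 7, 11, 13, 17, 19, 23].map fun p => (p, mMask n p)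

theorem run50 : srch 50 (fullMask 123) (pList 123) (fullMask 123) = true := by decide +kernel
theorem run51 : srch 51 (fullMask 126) (pList 126) (fullMask 126) = true := by decide +kernel
theorem run54 : srch 54 (fullMask 135) (pList 135) (fullMask 135) = true := by decide +kernel
theorem good50 : goodMasks 123 (fullMask 123) (pList 123) = true := by decide +kernel
theorem good51 : goodMasks 126 (fullMask 126) (pList 126) = true := by decide +kernel
theorem good54 : goodMasks 135 (fullMask 135) (pList 135) = true := by decide +kernel


theorem cnt_mod (n : ℕ) : ∀ N : ℕ, N < 256 ^ n → (∀ j, N.testBit j = true → 8 ∣ j) →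
    N % 255 = (∑ i ∈ Finset.range n, (N.testBit (8 * i)).toNat) % 255 := by
  induction n with
  | zero => intro N hN _; simp at hN; simp [hN]
  | succ n ih =>
    intro N hN hb
    have hd : ∀ j, (N / 256).testBit j = N.testBit (8 + j) := by
      intro j
      have := Nat.testBit_div_two_pow (x := N) (n := 8) j
      simpa [add_comm] using this
    have h1 := ih (N / 256) (by rw [pow_succ] at hN; omega) (by
      intro j hj
      rw [hd] at hj
      have := hb _ hj
      omega)
    have h2 : N % 256 = (N.testBit 0).toNat := by
      apply Nat.eq_of_testBit_eq
      intro j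
      have h3 := Nat.testBit_mod_two_pow N 8 j
      norm_num at h3
      rw [h3]
      rcases Nat.eq_zero_or_pos j with rfl | hj
      · cases N.testBit 0 <;> simp
      · have h4 : (N.testBit 0).toNat.testBit j = false := by
          apply Nat.testBit_lt_two_pow
          calc (N.testBit 0).toNat ≤ 1 := Bool.toNat_le _
            _ < 2 ^ j := Nat.one_lt_two_pow (by omega)
        rw [h4]
        by_cases h8 : j < 8
        · have : N.testBit j = false := by
            by_contra hc
            have := hb j (by simpa using hc)
            omega
          simp [this]
        · simp [h8]
    rw [Finset.sum_range_succ']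
    have h5 : ∀ i, N.testBit (8 * (i + 1)) = (N / 256).testBit (8 * i) := by
      intro i; rw [hd]; congr 1; ring
    simp only [h5, mul_zero]
    rw [← h2]
    omega

theorem card_le_mod (n N : ℕ) (hn : n < 255) (hN : N < 256 ^ n)
    (hb : ∀ j, N.testBit j = true → 8 ∣ j) (T : Finset ℕ)
    (hT : ∀ i ∈ T, i < n ∧ N.testBit (8 * i) = true) : T.card ≤ N % 255 := by
  rw [cnt_mod n N hN hb]
  have h1 : ∑ i ∈ Finset.range n, (N.testBit (8 * i)).toNat ≤ n := by
    calc _ ≤ ∑ i ∈ Finset.range n, 1 := Finset.sum_le_sum fun i _ => Bool.toNat_le _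
      _ = n := by simp
  rw [Nat.mod_eq_of_lt (by omega)]
  calc T.card = ∑ i ∈ T, (N.testBit (8 * i)).toNat := by
        rw [Finset.card_eq_sum_ones]
        apply Finset.sum_congr rfl
        intro i hi
        simp [(hT i hi).2]
    _ ≤ _ := Finset.sum_le_sum_of_subset (by
        intro i hi
        simpa using (hT i hi).1)

theorem srch_sound (n k F : ℕ) (hn : n < 255) (T : Finset ℕ) : ∀ (ps : List (ℕ × ℕ)) (S : ℕ),
    goodMasks n F ps = true → srch k F ps S = true →
    (∀ q ∈ ps, ∃ r < q.1, ∀ i ∈ T, i % q.1 ≠ r) →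
    S < 256 ^ n → (∀ j, S.testBit j = true → 8 ∣ j) →
    (∀ i ∈ T, i < n ∧ S.testBit (8 * i) = true) → T.card < k := by
  intro ps
  induction ps with
  | nil => intro S _ h; simp [srch] at h
  | cons q ps ih =>
    intro S hg hs hp hS hb hT
    obtain ⟨r, hr, hTr⟩ := hp q (by simp)
    simp only [goodMasks, List.all_cons, Bool.and_eq_true] at hg
    obtain ⟨hg1, hg2⟩ := hg
    rw [List.all_eq_true] at hg1
    have hg1 := hg1 r (by simpa using hr)
    rw [List.all_eq_true] at hg1
    simp only [srch] at hs
    rw [List.all_eq_true] at hs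
    have hs := hs r (by simpa using hr)
    generalize hK : keepMask F q.2 r = K at hs hg1
    have hl : Nat.land S K = S &&& K := rfl
    rw [hl] at hs
    have hS' : S &&& K < 256 ^ n := lt_of_le_of_lt Nat.and_le_left hS
    have hb' : ∀ j, (S &&& K).testBit j = true → 8 ∣ j := by
      intro j hj
      rw [Nat.testBit_and, Bool.and_eq_true] at hj
      exact hb j hj.1
    have hT' : ∀ i ∈ T, i < n ∧ (S &&& K).testBit (8 * i) = true := by
      intro i hi
      refine ⟨(hT i hi).1, ?_⟩
      rw [Nat.testBit_and, (hT i hi).2, Bool.true_and]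
      have h := hg1 i (by simpa using (hT i hi).1)
      rw [Bool.or_eq_true] at h
      rcases h with h | h
      · exact absurd (Nat.eq_of_beq_eq_true h) (hTr i hi)
      · have h := Nat.eq_of_beq_eq_true h
        change (K >>> (8 * i)) &&& 1 = 1 at h
        rw [Nat.testBit, Nat.and_comm, h]
        rfl
    rw [Bool.or_eq_true] at hs
    rcases hs with h | h
    · have h1 := card_le_mod n _ hn hS' hb' T hT'
      have h2 : ¬ k ≤ (S &&& K) % 255 := by
        intro h3
        have : Nat.ble k (Nat.mod (S &&& K) 255) = true := Nat.ble_eq.mpr h3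
        rw [this] at h
        simp at h
      omega
    · exact ih _ hg2 h (fun q hq => hp q (by simp [hq])) hS' hb' hT'

theorem lower (n k : ℕ) (hn : n < 255) (hg : goodMasks n (fullMask n) (pList n) = true)
    (hs : srch (k + 1) (fullMask n) (pList n) (fullMask n) = true)
    (hF : fullMask n < 256 ^ n)
    (hF1 : ∀ j < 8 * n, (fullMask n).testBit j = decide (8 ∣ j))
    (h : Fin (k + 1) → ℤ) (ha : Admissible h) : (2 * n : ℤ) ≤ h (Fin.last k) - h 0 := by
  by_contra hc
  push Not at hc
  obtain ⟨hm, ha⟩ := ha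
  have h2 : ∀ i, ∃ x : ℕ, h i = h 0 + 2 * x ∧ x < n := by
    intro i
    obtain ⟨a, h2⟩ := ha 2 Nat.prime_two
    have e : ((h i : ℤ) : ZMod 2) = ((h 0 : ℤ) : ZMod 2) := by
      have h3 := h2 i
      have h4 := h2 0
      generalize ((h i : ℤ) : ZMod 2) = u at *
      generalize ((h 0 : ℤ) : ZMod 2) = v at *
      clear h2
      revert u v a
      decide
    rw [ZMod.intCast_eq_intCast_iff_dvd_sub] at e
    have l1 : h 0 ≤ h i := hm.monotone (Fin.zero_le i)
    have l2 : h i ≤ h (Fin.last k) := hm.monotone (Fin.le_last i)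
    exact ⟨((h i - h 0) / 2).toNat, by omega, by omega⟩
  choose x hx hxn using h2
  have hinj : Function.Injective x := by
    intro i j hij
    apply hm.injective
    rw [hx i, hx j, hij]
  have hb : ∀ j, (fullMask n).testBit j = true → 8 ∣ j := by
    intro j hj
    by_cases hjn : j < 8 * n
    · rw [hF1 j hjn] at hj
      simpa using hj
    · rw [Nat.testBit_lt_two_pow] at hj
      · simp at hj
      · calc fullMask n < 256 ^ n := hF
          _ = 2 ^ (8 * n) := by rw [pow_mul]; norm_num
          _ ≤ 2 ^ j := Nat.pow_le_pow_right (by norm_num) (by omega)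
  have key : ∀ p : ℕ, p.Prime → p ≠ 2 → ∃ r < p, ∀ i, x i % p ≠ r := by
    intro p hp hp2
    have : Fact p.Prime := ⟨hp⟩
    obtain ⟨a, h3⟩ := ha p hp
    have h20 : (2 : ZMod p) ≠ 0 := by
      intro h0
      have h0' : ((2 : ℕ) : ZMod p) = 0 := by exact_mod_cast h0
      rw [ZMod.natCast_eq_zero_iff] at h0'
      exact hp2 ((Nat.prime_dvd_prime_iff_eq hp Nat.prime_two).mp h0')
    refine ⟨((a - (h 0 : ZMod p)) / 2).val, ZMod.val_lt _, ?_⟩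
    intro i hi
    apply h3 i
    have h4 : ((x i : ℕ) : ZMod p) = (a - (h 0 : ZMod p)) / 2 := by
      rw [← ZMod.natCast_mod, hi, ZMod.natCast_zmod_val]
    rw [hx i]
    push_cast
    rw [h4]
    field_simp
    ring
  have := srch_sound n (k + 1) (fullMask n) hn (Finset.univ.image x) (pList n) (fullMask n) hg hs
    (by
      intro q hq
      simp only [pList, List.mem_map] at hq
      obtain ⟨p, hp, rfl⟩ := hq
      have hp' : p.Prime ∧ p ≠ 2 := by
        simp only [List.mem_cons, List.not_mem_nil, or_false] at hp
        rcases hp with rfl | rfl | rfl | rfl | rfl | rfl | rfl | rfl <;> norm_num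
      obtain ⟨r, hr, h5⟩ := key p hp'.1 hp'.2
      refine ⟨r, hr, ?_⟩
      intro i hi
      simp only [Finset.mem_image, Finset.mem_univ, true_and] at hi
      obtain ⟨j, rfl⟩ := hi
      exact h5 j)
    hF hb
    (by
      intro i hi
      simp only [Finset.mem_image, Finset.mem_univ, true_and] at hi
      obtain ⟨j, rfl⟩ := hi
      refine ⟨hxn j, ?_⟩
      rw [hF1 _ (by have := hxn j; omega)]
      simp)
  rw [Finset.card_image_of_injective _ hinj] at this
  simp at this

theorem admissible_of (k : ℕ) (h : Fin k → ℤ) (hm : StrictMono h) (hk : k < 55)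
    (hc : ∀ p : ℕ, p < 55 → 2 ≤ p → ∃ r : ℕ, r < p ∧ ∀ i, h i % (p : ℤ) ≠ (r : ℤ)) : Admissible h := by
  refine ⟨hm, ?_⟩
  intro p hp
  have : Fact p.Prime := ⟨hp⟩
  by_cases hp5 : p < 55
  · obtain ⟨r, hr, h1⟩ := hc p hp5 hp.two_le
    refine ⟨((r : ℤ) : ZMod p), ?_⟩
    intro i hi
    apply h1 i
    rw [ZMod.intCast_eq_intCast_iff] at hi
    rw [hi]
    exact Int.emod_eq_of_lt (by omega) (by omega)
  · by_contra hcon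
    push Not at hcon
    have hs : Function.Surjective (fun i => (h i : ZMod p)) := hcon
    have := Fintype.card_le_of_surjective _ hs
    simp [ZMod.card] at this
    omega

def w50 : Fin 50 → ℤ := ![0, 4, 6, 10, 16, 18, 24, 28, 34, 36, 60, 64, 66, 70, 76, 78, 84, 88, 90, 94, 100, 106, 108, 114, 120, 126, 130, 136, 144, 148, 154, 156, 160, 168, 174, 178, 186, 190, 196, 198, 204, 214, 216, 220, 226, 234, 238, 240, 244, 246]

theorem w50_adm : Admissible w50 :=
  admissible_of _ _ (by rw [Fin.strictMono_iff_lt_succ]; decide +kernel) (by norm_num)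
    (by decide +kernel)

def w51 : Fin 51 → ℤ := ![0, 6, 10, 12, 16, 22, 28, 30, 36, 40, 42, 48, 52, 58, 66, 70, 72, 76, 78, 82, 96, 100, 106, 108, 118, 120, 126, 132, 136, 142, 148, 150, 160, 162, 166, 168, 180, 192, 196, 198, 202, 208, 210, 220, 226, 232, 238, 240, 246, 250, 252]

theorem w51_adm : Admissible w51 :=
  admissible_of _ _ (by rw [Fin.strictMono_iff_lt_succ]; decide +kernel) (by norm_num)
    (by decide +kernel)

def w54 : Fin 54 → ℤ := ![0, 4, 6, 10, 16, 18, 24, 28, 30, 34, 40, 46, 48, 54, 60, 66, 70, 76, 84, 88, 94, 96, 100, 108, 114, 118, 126, 130, 136, 138, 144, 150, 154, 156, 160, 174, 178, 180, 184, 186, 196, 198, 208, 210, 214, 228, 238, 240, 244, 250, 258, 264, 268, 270]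

theorem w54_adm : Admissible w54 :=
  admissible_of _ _ (by rw [Fin.strictMono_iff_lt_succ]; decide +kernel) (by norm_num)
    (by decide +kernel)

/-- **H(50) = 246, H(51) = 252, H(54) = 270**: the minimal diameter of an admissible
`50`-tuple (resp. `51`-tuple, `54`-tuple) is `246` (resp. `252`, `270`). -/
theorem H50_H51_H54 :
    ((∃ h : Fin 50 → ℤ, Admissible h ∧ h 49 - h 0 = 246) ∧
      (∀ h : Fin 50 → ℤ, Admissible h → 246 ≤ h 49 - h 0)) ∧
    ((∃ h : Fin 51 → ℤ, Admissible h ∧ h 50 - h 0 = 252) ∧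
      (∀ h : Fin 51 → ℤ, Admissible h → 252 ≤ h 50 - h 0)) ∧
    ((∃ h : Fin 54 → ℤ, Admissible h ∧ h 53 - h 0 = 270) ∧
      (∀ h : Fin 54 → ℤ, Admissible h → 270 ≤ h 53 - h 0)) := by
  refine ⟨⟨⟨w50, w50_adm, by decide +kernel⟩, ?_⟩, ⟨⟨w51, w51_adm, by decide +kernel⟩, ?_⟩,
    ⟨w54, w54_adm, by decide +kernel⟩, ?_⟩
  · intro h ha
    exact lower 123 49 (by norm_num) good50 run50 (by decide +kernel) (by decide +kernel) h ha
  · intro h ha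
    exact lower 126 50 (by norm_num) good51 run51 (by decide +kernel) (by decide +kernel) h ha
  · intro h ha
    exact lower 135 53 (by norm_num) good54 run54 (by decide +kernel) (by decide +kernel) h ha
end

section
/- As k → ∞ one has H(k) ≤ k log k + k log log k − k + o(k); that is, for every ε > 0 there exists K such that for all k ≥ K there is an admissible k-tuple of diameter at most k log k + k log log k − k + ε·k. -/
section

open Complex Filter Topology

/-- telescoping term -/
noncomputable def zc (s : ℂ) (n : ℕ) : ℂ :=
  (s - 1) * (n + 1 : ℂ) ^ (-s) - ((n + 1 : ℂ) ^ (1 - s) - (n + 2 : ℂ) ^ (1 - s))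

lemma zc_hasDeriv (s : ℂ) (x : ℝ) (hx : 0 < x) :
    HasDerivAt (fun y : ℝ => (y : ℂ) ^ s) (s * (x : ℂ) ^ (s - 1)) x := by
  rcases eq_or_ne s 0 with rfl | hs
  · simpa using hasDerivAt_const x (1 : ℂ)
  · exact hasDerivAt_ofReal_cpow_const hx.ne' hs

lemma zc_sub_le (s : ℂ) (hs : 0 ≤ s.re) (n : ℕ) (x : ℝ) (hx : x ∈ Set.Icc (n + 1 : ℝ) (n + 2)) :
    ‖((n + 1 : ℝ) : ℂ) ^ (-s) - (x : ℂ) ^ (-s)‖ ≤ ‖s‖ * (n + 1 : ℝ) ^ (-s.re - 1) := by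
  have key := (convex_Icc (n + 1 : ℝ) (n + 2)).norm_image_sub_le_of_norm_hasDerivWithin_le
    (f := fun y : ℝ => (y : ℂ) ^ (-s)) (f' := fun y : ℝ => (-s) * (y : ℂ) ^ (-s - 1))
    (C := ‖s‖ * (n + 1 : ℝ) ^ (-s.re - 1)) (x := x) (y := (n + 1 : ℝ)) ?_ ?_ hx ?_
  · refine key.trans ?_
    have h1 : ‖(n + 1 : ℝ) - x‖ ≤ 1 := by
      rw [Real.norm_eq_abs, abs_le]; constructor <;> linarith [hx.1, hx.2]
    have : 0 ≤ ‖s‖ * (n + 1 : ℝ) ^ (-s.re - 1) := by positivity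
    nlinarith
  · intro y hy
    have : (0 : ℝ) < y := lt_of_lt_of_le (by positivity) hy.1
    exact (zc_hasDeriv (-s) y this).hasDerivWithinAt
  · intro y hy
    have hy0 : (0 : ℝ) < y := lt_of_lt_of_le (by positivity) hy.1
    rw [norm_mul, norm_neg, Complex.norm_cpow_eq_rpow_re_of_pos hy0]
    gcongr
    simp only [sub_re, neg_re, one_re]
    exact Real.rpow_le_rpow_of_nonpos (by positivity) hy.1 (by linarith)
  · constructor <;> simp

lemma zc_le (s : ℂ) (hs : 0 ≤ s.re) (n : ℕ) :
    ‖zc s n‖ ≤ ‖s - 1‖ * (‖s‖ * (n + 1 : ℝ) ^ (-s.re - 1)) := by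
  have key := (convex_Icc (n + 1 : ℝ) (n + 2)).norm_image_sub_le_of_norm_hasDerivWithin_le
    (f := fun y : ℝ => (s - 1) * ((n + 1 : ℝ) : ℂ) ^ (-s) * y + (y : ℂ) ^ (1 - s))
    (f' := fun y : ℝ => (s - 1) * ((n + 1 : ℝ) : ℂ) ^ (-s) + (1 - s) * (y : ℂ) ^ (1 - s - 1))
    (C := ‖s - 1‖ * (‖s‖ * (n + 1 : ℝ) ^ (-s.re - 1))) (x := (n + 1 : ℝ)) (y := (n + 2 : ℝ)) ?_ ?_
    (by simp) (by simp)
  · have h2 : ‖(n + 2 : ℝ) - (n + 1)‖ = 1 := by norm_num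
    rw [h2, mul_one] at key
    refine le_trans (le_of_eq ?_) key
    congr 1
    unfold zc
    push_cast
    ring
  · intro y hy
    have hy0 : (0 : ℝ) < y := lt_of_lt_of_le (by positivity) hy.1
    refine HasDerivAt.hasDerivWithinAt ?_
    refine HasDerivAt.add ?_ (zc_hasDeriv (1 - s) y hy0)
    simpa using (Complex.ofRealCLM.hasDerivAt (x := y)).const_mul
      ((s - 1) * ((n + 1 : ℝ) : ℂ) ^ (-s))
  · intro y hy
    have : (s - 1) * ((n + 1 : ℝ) : ℂ) ^ (-s) + (1 - s) * (y : ℂ) ^ (1 - s - 1)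
      = (s - 1) * (((n + 1 : ℝ) : ℂ) ^ (-s) - (y : ℂ) ^ (-s)) := by
      rw [show (1 - s - 1) = -s by ring]; ring
    rw [this, norm_mul]
    gcongr
    exact zc_sub_le s hs n y hy

lemma zc_sum (s : ℂ) (M : ℕ) : ∑ n ∈ Finset.range M, zc s n =
    (s - 1) * ∑ n ∈ Finset.range M, (n + 1 : ℂ) ^ (-s) - 1 + (M + 1 : ℂ) ^ (1 - s) := by
  induction M with
  | zero => simp
  | succ M ih =>
    rw [Finset.sum_range_succ, ih, Finset.sum_range_succ]
    unfold zc
    push_cast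
    rw [show (M + 1 + 1 : ℂ) = M + 2 by ring]
    ring

lemma zc_summable_aux (a : ℝ) (ha : 0 < a) : Summable fun n : ℕ => (n + 1 : ℝ) ^ (-a - 1) := by
  have := (summable_nat_add_iff 1).2 (Real.summable_nat_rpow (p := -a - 1) |>.2 (by linarith))
  simpa using this

lemma zc_summable (s : ℂ) (hs : 0 < s.re) : Summable (zc s) := by
  refine Summable.of_norm_bounded (g := fun n : ℕ => ‖s - 1‖ * (‖s‖ * (n + 1 : ℝ) ^ (-s.re - 1)))
    ?_ (fun n => zc_le s hs.le n)
  exact ((zc_summable_aux _ hs).mul_left _).mul_left _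

lemma zc_diff : DifferentiableOn ℂ (fun s => ∑' n, zc s n) {s | 0 < s.re} := by
  intro s hs
  have hs' : 0 < s.re := hs
  set U : Set ℂ := {z | s.re / 2 < z.re} ∩ Metric.ball s 1 with hU
  have hUo : IsOpen U := (isOpen_lt continuous_const Complex.continuous_re).inter Metric.isOpen_ball
  have hsU : s ∈ U := ⟨by simp; linarith, by simp⟩
  have : DifferentiableOn ℂ (fun s => ∑' n, zc s n) U := by
    refine differentiableOn_tsum_of_summable_norm
      (u := fun n : ℕ => (‖s‖ + 2) * ((‖s‖ + 1) * (n + 1 : ℝ) ^ (-(s.re / 2) - 1))) ?_ ?_ hUo ?_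
    · exact ((zc_summable_aux _ (by linarith)).mul_left _).mul_left _
    · intro n z hz
      unfold zc
      have h1 : (n + 1 : ℂ) ≠ 0 := by exact_mod_cast Nat.succ_ne_zero n
      have h2 : (n + 2 : ℂ) ≠ 0 := by exact_mod_cast Nat.succ_ne_zero (n + 1)
      refine DifferentiableAt.differentiableWithinAt ?_
      refine DifferentiableAt.sub (DifferentiableAt.mul (by fun_prop) ?_) (DifferentiableAt.sub ?_ ?_)
      · exact DifferentiableAt.const_cpow (by fun_prop) (Or.inl h1)
      · exact DifferentiableAt.const_cpow (by fun_prop) (Or.inl h1)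
      · exact DifferentiableAt.const_cpow (by fun_prop) (Or.inl h2)
    · intro n z hz
      have hz1 : s.re / 2 < z.re := hz.1
      have hz2 : ‖z - s‖ < 1 := by simpa [dist_eq_norm] using hz.2
      have hz3 : ‖z‖ ≤ ‖s‖ + 1 := by
        calc ‖z‖ = ‖(z - s) + s‖ := by ring_nf
          _ ≤ _ := norm_add_le _ _
          _ ≤ _ := by linarith
      have hz4 : ‖z - 1‖ ≤ ‖s‖ + 2 := by
        calc ‖z - 1‖ ≤ ‖z‖ + ‖(1 : ℂ)‖ := norm_sub_le _ _
          _ ≤ _ := by rw [norm_one]; linarith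
      refine (zc_le z (by linarith) n).trans ?_
      gcongr
      simp
  exact (this.differentiableAt (hUo.mem_nhds hsU)).differentiableWithinAt

lemma zeta1_eq_of_one_lt (s : ℂ) (hs : 1 < s.re) : riemannZeta₁ s = 1 + ∑' n, zc s n := by
  have hs1 : s ≠ 1 := by rintro rfl; simp at hs
  have h0 : s - 1 ≠ 0 := sub_ne_zero.2 hs1
  have hz : riemannZeta₁ s = (s - 1) * riemannZeta s := by
    rw [riemannZeta_eq_inv_sub_mul hs1]; field_simp
  rw [hz, zeta_eq_tsum_one_div_nat_add_one_cpow hs]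
  have hsum : Summable fun n : ℕ => 1 / (n + 1 : ℂ) ^ s := by
    have := (summable_nat_add_iff 1).2 (Complex.summable_one_div_nat_cpow.2 hs)
    simpa using this
  have ht : Tendsto (fun M : ℕ => ∑ n ∈ Finset.range M, zc s n) atTop
      (𝓝 ((s - 1) * ∑' n : ℕ, 1 / (n + 1 : ℂ) ^ s - 1 + 0)) := by
    simp_rw [zc_sum]
    refine Tendsto.add (Tendsto.sub_const (Tendsto.const_mul _ ?_) _) ?_
    · have := hsum.hasSum.tendsto_sum_nat
      refine this.congr fun M => Finset.sum_congr rfl fun n _ => ?_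
      rw [Complex.cpow_neg, one_div]
    · rw [tendsto_zero_iff_norm_tendsto_zero]
      have h3 : Tendsto (fun M : ℕ => ((M + 1 : ℕ) : ℝ) ^ (-(s.re - 1))) atTop (𝓝 0) :=
        ((tendsto_rpow_neg_atTop (by linarith)).comp tendsto_natCast_atTop_atTop).comp
          (tendsto_add_atTop_nat 1)
      refine h3.congr fun M => ?_
      have := Complex.norm_natCast_cpow_of_pos (Nat.succ_pos M) (1 - s)
      push_cast at this ⊢
      rw [this]
      simp
  have := tendsto_nhds_unique ht (zc_summable s (by linarith)).hasSum.tendsto_sum_nat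
  rw [← this]; ring

lemma zeta1_eq (s : ℂ) (hs : 0 < s.re) : riemannZeta₁ s = 1 + ∑' n, zc s n := by
  have hU : IsOpen {s : ℂ | 0 < s.re} := isOpen_lt continuous_const Complex.continuous_re
  have hc : Convex ℝ {s : ℂ | 0 < s.re} := convex_halfSpace_re_gt 0
  have h1 : AnalyticOnNhd ℂ riemannZeta₁ {s : ℂ | 0 < s.re} :=
    differentiable_riemannZeta₁.differentiableOn.analyticOnNhd hU
  have h2 : AnalyticOnNhd ℂ (fun s => 1 + ∑' n, zc s n) {s : ℂ | 0 < s.re} :=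
    ((differentiableOn_const _).add zc_diff).analyticOnNhd hU
  refine h1.eqOn_of_preconnected_of_eventuallyEq h2 hc.isPreconnected (z₀ := 2) (by simp) ?_ hs
  have hV : IsOpen {s : ℂ | 1 < s.re} := isOpen_lt continuous_const Complex.continuous_re
  filter_upwards [hV.mem_nhds (show (2 : ℂ) ∈ {s : ℂ | 1 < s.re} by simp)] with z hz
  exact zeta1_eq_of_one_lt z hz

lemma zeta1_eq_trunc (s : ℂ) (hs : 0 < s.re) (M : ℕ) : riemannZeta₁ s =
    (s - 1) * ∑ n ∈ Finset.range M, (n + 1 : ℂ) ^ (-s) + (M + 1 : ℂ) ^ (1 - s)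
      + ∑' n, zc s (n + M) := by
  rw [zeta1_eq s hs, ← (zc_summable s hs).sum_add_tsum_nat_add M, zc_sum]
  ring

lemma zeta_bound : ∃ C : ℝ, 0 < C ∧ ∀ s : ℂ, 159 / 160 ≤ s.re → s.re ≤ 4 → 1 ≤ |s.im| →
    ‖riemannZeta s‖ ≤ C * |s.im| ^ (1 / 40 : ℝ) := by
  set A : ℝ := ∑' n : ℕ, (n + 1 : ℝ) ^ (-(1 / 160) - 1 : ℝ) with hA
  set B : ℝ := ∑' n : ℕ, (n + 1 : ℝ) ^ (-(1 / 4) - 1 : ℝ) with hB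
  have hA0 : 0 ≤ A := tsum_nonneg fun n => by positivity
  have hB0 : 0 ≤ B := tsum_nonneg fun n => by positivity
  refine ⟨3 * A + 3 + 5 * B, by positivity, fun s h1 h4 ht => ?_⟩
  set t := |s.im| with htdef
  have ht0 : 0 < t := by linarith
  have hs1 : s ≠ 1 := by
    rintro rfl; simp at htdef; linarith
  have hts : t ≤ ‖s - 1‖ := by
    have := Complex.abs_im_le_norm (s - 1); simpa using this
  have hsn : ‖s‖ ≤ 5 * t := by
    have := Complex.norm_le_abs_re_add_abs_im s
    rw [abs_of_nonneg (by linarith : 0 ≤ s.re)] at this; linarith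
  have h0 : 0 < ‖s - 1‖ := by linarith
  set M := ⌊t ^ 2⌋₊ with hM
  have hM1 : (M : ℝ) ≤ t ^ 2 := Nat.floor_le (by positivity)
  have hM2 : t ^ 2 < M + 1 := Nat.lt_floor_add_one _
  have hM3 : (M : ℝ) + 1 ≤ 2 * t ^ 2 := by nlinarith
  have htq : 1 ≤ t ^ (1 / 40 : ℝ) := Real.one_le_rpow ht (by norm_num)
  -- power bound
  have hpow : (M + 1 : ℝ) ^ (1 / 80 : ℝ) ≤ 2 * t ^ (1 / 40 : ℝ) := by
    calc (M + 1 : ℝ) ^ (1 / 80 : ℝ) ≤ (2 * t ^ 2) ^ (1 / 80 : ℝ) := by gcongr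
      _ = 2 ^ (1 / 80 : ℝ) * t ^ (1 / 40 : ℝ) := by
          rw [Real.mul_rpow (by norm_num) (by positivity), ← Real.rpow_natCast t 2,
            ← Real.rpow_mul ht0.le]; norm_num
      _ ≤ 2 * t ^ (1 / 40 : ℝ) := by
          gcongr
          calc (2 : ℝ) ^ (1 / 80 : ℝ) ≤ 2 ^ (1 : ℝ) := by
                apply Real.rpow_le_rpow_of_exponent_le <;> norm_num
            _ = 2 := by norm_num
  -- three terms
  have T1 : ‖∑ n ∈ Finset.range M, (n + 1 : ℂ) ^ (-s)‖ ≤ 2 * t ^ (1 / 40 : ℝ) * A := by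
    calc ‖∑ n ∈ Finset.range M, (n + 1 : ℂ) ^ (-s)‖
        ≤ ∑ n ∈ Finset.range M, (M + 1 : ℝ) ^ (1 / 80 : ℝ) * (n + 1 : ℝ) ^ (-(1 / 160) - 1 : ℝ) := by
          refine norm_sum_le_of_le _ fun n hn => ?_
          have hn' : (n : ℝ) + 1 ≤ M + 1 := by
            have := (Finset.mem_range.1 hn).le
            have : (n : ℝ) ≤ M := by exact_mod_cast this
            linarith
          have := Complex.norm_natCast_cpow_of_pos (Nat.succ_pos n) (-s)
          push_cast at this
          rw [this]
          calc (n + 1 : ℝ) ^ (-s).re ≤ (n + 1 : ℝ) ^ ((1 / 80) + (-(1 / 160) - 1) : ℝ) := by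
                apply Real.rpow_le_rpow_of_exponent_le
                · linarith [Nat.cast_nonneg (α := ℝ) n]
                · simp; linarith
            _ = (n + 1 : ℝ) ^ (1 / 80 : ℝ) * (n + 1 : ℝ) ^ (-(1 / 160) - 1 : ℝ) :=
                Real.rpow_add (by positivity) _ _
            _ ≤ _ := by gcongr
      _ = (M + 1 : ℝ) ^ (1 / 80 : ℝ) * ∑ n ∈ Finset.range M, (n + 1 : ℝ) ^ (-(1 / 160) - 1 : ℝ) := by
          rw [Finset.mul_sum]
      _ ≤ 2 * t ^ (1 / 40 : ℝ) * A := by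
          gcongr
          exact (zc_summable_aux _ (by norm_num)).sum_le_tsum _ fun n _ => by positivity
  have T2 : ‖(M + 1 : ℂ) ^ (1 - s)‖ ≤ 2 * t ^ (1 / 40 : ℝ) * ‖s - 1‖ := by
    have := Complex.norm_natCast_cpow_of_pos (Nat.succ_pos M) (1 - s)
    push_cast at this
    rw [this]
    calc (M + 1 : ℝ) ^ (1 - s).re ≤ (M + 1 : ℝ) ^ (1 / 80 : ℝ) := by
          apply Real.rpow_le_rpow_of_exponent_le
          · linarith [Nat.cast_nonneg (α := ℝ) M]
          · simp; linarith
      _ ≤ 2 * t ^ (1 / 40 : ℝ) := hpow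
      _ ≤ _ := le_mul_of_one_le_right (by positivity) (by linarith)
  have T3 : ‖∑' n, zc s (n + M)‖ ≤ ‖s - 1‖ * (5 * B) := by
    have hb : ∀ n : ℕ, ‖zc s (n + M)‖ ≤ ‖s - 1‖ * (5 * (n + 1 : ℝ) ^ (-(1 / 4) - 1 : ℝ)) := by
      intro n
      refine (zc_le s (by linarith) (n + M)).trans ?_
      gcongr ‖s - 1‖ * ?_
      push_cast
      have hn : (0 : ℝ) ≤ n := Nat.cast_nonneg n
      have hMn : (0 : ℝ) ≤ M := Nat.cast_nonneg M
      have e1 : (n + M + 1 : ℝ) ^ (-s.re - 1) ≤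
          (n + M + 1 : ℝ) ^ (-(1 / 2) : ℝ) * (n + M + 1 : ℝ) ^ (-(1 / 4) - 1 : ℝ) := by
        rw [← Real.rpow_add (by positivity)]
        apply Real.rpow_le_rpow_of_exponent_le
        · linarith
        · linarith
      have e2 : (n + M + 1 : ℝ) ^ (-(1 / 2) : ℝ) ≤ t⁻¹ := by
        calc (n + M + 1 : ℝ) ^ (-(1 / 2) : ℝ) ≤ (t ^ 2) ^ (-(1 / 2) : ℝ) :=
              Real.rpow_le_rpow_of_nonpos (by positivity) (by linarith) (by norm_num)
          _ = t⁻¹ := by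
              rw [← Real.rpow_natCast t 2, ← Real.rpow_mul ht0.le, ← Real.rpow_neg_one]
              norm_num
      have e3 : (n + M + 1 : ℝ) ^ (-(1 / 4) - 1 : ℝ) ≤ (n + 1 : ℝ) ^ (-(1 / 4) - 1 : ℝ) :=
        Real.rpow_le_rpow_of_nonpos (by positivity) (by linarith) (by norm_num)
      calc ‖s‖ * (n + M + 1 : ℝ) ^ (-s.re - 1)
          ≤ (5 * t) * (t⁻¹ * (n + 1 : ℝ) ^ (-(1 / 4) - 1 : ℝ)) := by
            gcongr
            refine e1.trans ?_
            gcongr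
        _ = 5 * (n + 1 : ℝ) ^ (-(1 / 4) - 1 : ℝ) := by field_simp
    have hs2 := ((zc_summable_aux (1 / 4) (by norm_num)).mul_left 5).mul_left ‖s - 1‖
    refine (tsum_of_norm_bounded hs2.hasSum hb).trans (le_of_eq ?_)
    rw [tsum_mul_left, tsum_mul_left]
  rw [riemannZeta_eq_inv_sub_mul hs1, norm_mul, norm_inv, inv_mul_le_iff₀ h0,
    zeta1_eq_trunc s (by linarith) M]
  calc _ ≤ ‖(s - 1) * ∑ n ∈ Finset.range M, (n + 1 : ℂ) ^ (-s)‖ + ‖(M + 1 : ℂ) ^ (1 - s)‖ +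
        ‖∑' n, zc s (n + M)‖ := norm_add₃_le
    _ ≤ ‖s - 1‖ * (2 * t ^ (1 / 40 : ℝ) * A) + 2 * t ^ (1 / 40 : ℝ) * ‖s - 1‖ +
        ‖s - 1‖ * (5 * B) := by
        rw [norm_mul]; gcongr
    _ = ‖s - 1‖ * (2 * t ^ (1 / 40 : ℝ) * A + 2 * t ^ (1 / 40 : ℝ) + 5 * B * 1) := by ring
    _ ≤ ‖s - 1‖ * ((3 * A + 3 + 5 * B) * t ^ (1 / 40 : ℝ)) := by
        gcongr
        have : 5 * B * 1 ≤ 5 * B * t ^ (1 / 40 : ℝ) := by gcongr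
        have : 0 ≤ A * t ^ (1 / 40 : ℝ) := by positivity
        nlinarith

end

section

open Complex Filter Topology

lemma zeta_diffAt {s : ℂ} (h : 1 ≤ |s.im|) : DifferentiableAt ℂ riemannZeta s :=
  differentiableAt_riemannZeta (by rintro rfl; simp at h; linarith)

lemma two_mul_rpow_le {t u : ℝ} (hu : 0 ≤ u) (h : u ≤ 2 * t) :
    u ^ (1 / 40 : ℝ) ≤ 2 * t ^ (1 / 40 : ℝ) := by
  have ht : 0 ≤ t := by linarith
  calc u ^ (1 / 40 : ℝ) ≤ (2 * t) ^ (1 / 40 : ℝ) := by gcongr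
    _ = 2 ^ (1 / 40 : ℝ) * t ^ (1 / 40 : ℝ) := Real.mul_rpow (by norm_num) ht
    _ ≤ 2 * t ^ (1 / 40 : ℝ) := by
        gcongr
        calc (2 : ℝ) ^ (1 / 40 : ℝ) ≤ 2 ^ (1 : ℝ) := by
              apply Real.rpow_le_rpow_of_exponent_le <;> norm_num
          _ = 2 := by norm_num

lemma re_im_close {s z : ℂ} {ρ : ℝ} (h : ‖z - s‖ ≤ ρ) :
    s.re - ρ ≤ z.re ∧ z.re ≤ s.re + ρ ∧ |s.im| - ρ ≤ |z.im| ∧ |z.im| ≤ |s.im| + ρ := by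
  have h1 := (Complex.abs_re_le_norm (z - s)).trans h
  have h2 := (Complex.abs_im_le_norm (z - s)).trans h
  rw [sub_re, abs_le] at h1
  rw [sub_im] at h2
  have h3 := abs_sub_abs_le_abs_sub z.im s.im
  have h4 := abs_sub_abs_le_abs_sub s.im z.im
  rw [abs_sub_comm] at h4
  refine ⟨by linarith, by linarith, by linarith, by linarith⟩

/-- all the upper bounds with one constant -/
lemma zeta_bounds : ∃ C : ℝ, 1 ≤ C ∧
    (∀ s : ℂ, 319 / 320 ≤ s.re → s.re ≤ 3 → 2 ≤ |s.im| →
      ‖riemannZeta s‖ ≤ C * |s.im| ^ (1 / 40 : ℝ) ∧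
      ‖deriv riemannZeta s‖ ≤ C * |s.im| ^ (1 / 40 : ℝ)) ∧
    (∀ x : ℝ, 0 < x → x ≤ 1 → ‖riemannZeta (1 + x)‖ ≤ C / x) := by
  obtain ⟨C, hC, hb⟩ := zeta_bound
  obtain ⟨B, hB⟩ := (isCompact_Icc (a := (0 : ℝ)) (b := 1)).exists_bound_of_continuousOn
    (f := fun x : ℝ => riemannZeta₀ (1 + x)) (by
      have := differentiable_riemannZeta₀.continuous
      fun_prop)
  have hB0 : 0 ≤ B := (norm_nonneg _).trans (hB 0 (by simp))
  refine ⟨1 + B + 640 * C, by nlinarith, fun s h1 h3 ht => ?_, fun x hx0 hx1 => ?_⟩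
  · have hp : 0 ≤ |s.im| ^ (1 / 40 : ℝ) := by positivity
    constructor
    · refine (hb s (by linarith) (by linarith) (by linarith)).trans ?_
      gcongr; linarith
    · have := norm_deriv_le_of_forall_mem_sphere_norm_le (c := s) (R := 1 / 320)
        (C := C * (2 * |s.im| ^ (1 / 40 : ℝ))) (f := riemannZeta) (by norm_num) ?_ ?_
      · refine this.trans ?_
        rw [div_le_iff₀ (by norm_num)]
        nlinarith
      · apply DifferentiableOn.diffContOnCl
        intro z hz
        rw [closure_ball _ (by norm_num), Metric.mem_closedBall, dist_eq_norm] at hz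
        have := re_im_close hz
        exact (zeta_diffAt (by linarith [this.2.2.1])).differentiableWithinAt
      · intro z hz
        rw [mem_sphere_iff_norm] at hz
        have := re_im_close hz.le
        refine (hb z (by linarith [this.1]) (by linarith [this.2.1])
          (by linarith [this.2.2.1])).trans ?_
        gcongr
        exact two_mul_rpow_le (abs_nonneg _) (by linarith [this.2.2.2])
  · have hne : (1 + x : ℂ) ≠ 1 := by
      simpa using hx0.ne'
    rw [riemannZeta_eq_inv_sub_add hne]
    have h1 := hB x ⟨hx0.le, hx1⟩
    calc _ ≤ ‖((1 + x : ℂ) - 1)⁻¹‖ + ‖riemannZeta₀ (1 + x)‖ := norm_add_le _ _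
      _ ≤ x⁻¹ + B := by
          gcongr
          rw [add_sub_cancel_left, norm_inv, Complex.norm_real, Real.norm_of_nonneg hx0.le]
      _ ≤ (1 + B + 640 * C) / x := by
          rw [le_div_iff₀ hx0, add_mul, inv_mul_cancel₀ hx0.ne']
          nlinarith

lemma zeta_341 {x : ℝ} (hx : 0 < x) (y : ℝ) :
    1 ≤ ‖riemannZeta (1 + x)‖ ^ 3 * ‖riemannZeta (1 + x + I * y)‖ ^ 4 *
      ‖riemannZeta (1 + x + 2 * I * y)‖ := by
  have := DirichletCharacter.norm_LFunction_product_ge_one (N := 1) 1 hx y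
  simpa [DirichletCharacter.LFunctionTrivChar] using this

lemma zeta_lower : ∃ c : ℝ, 0 < c ∧ ∀ s : ℂ, 1 < s.re → s.re ≤ 2 → 2 ≤ |s.im| →
    c * ((|s.im| ^ (1 / 40 : ℝ))⁻¹) ^ 4 ≤ ‖riemannZeta s‖ := by
  obtain ⟨C, hC1, hb, hx⟩ := zeta_bounds
  set a : ℝ := 1 / (4 * C ^ 2) with ha
  have ha0 : 0 < a := by positivity
  have haC : a * C = 1 / (4 * C) := by rw [ha]; field_simp
  have ha1 : a ≤ 1 := by
    rw [ha, div_le_one (by positivity)]; nlinarith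
  refine ⟨a ^ 3 / (4 * C), by positivity, fun s h1 h2 ht => ?_⟩
  set P : ℝ := |s.im| ^ (1 / 40 : ℝ) with hP
  have hP1 : 1 ≤ P := Real.one_le_rpow (by linarith) (by norm_num)
  have hP0 : 0 < P := by linarith
  set Q := P⁻¹ with hQ
  have hQ0 : 0 < Q := by positivity
  have hQ1 : Q ≤ 1 := inv_le_one_of_one_le₀ hP1
  have hPQ : P * Q = 1 := mul_inv_cancel₀ hP0.ne'
  set η : ℝ := a ^ 4 * Q ^ 5 with hη
  have hη0 : 0 < η := by positivity
  have hη1 : η ≤ 1 := mul_le_one₀ (pow_le_one₀ ha0.le ha1) (by positivity) (pow_le_one₀ hQ0.le hQ1)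
  -- lower bound for x ≥ η
  have key : ∀ x : ℝ, η ≤ x → x ≤ 1 →
      a ^ 3 * Q ^ 4 / (2 * C) ≤ ‖riemannZeta (1 + x + I * s.im)‖ := by
    intro x hx1 hx2
    have hx0 : 0 < x := by linarith
    have h341 := zeta_341 hx0 s.im
    have u1 := hx x hx0 hx2
    have u2 : ‖riemannZeta (1 + x + 2 * I * s.im)‖ ≤ C * (2 * P) := by
      have him : (1 + x + 2 * I * s.im : ℂ).im = 2 * s.im := by simp
      have hre : (1 + x + 2 * I * s.im : ℂ).re = 1 + x := by simp
      have := (hb (1 + x + 2 * I * s.im) (by rw [hre]; linarith) (by rw [hre]; linarith)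
        (by rw [him, abs_mul, abs_two]; linarith)).1
      refine this.trans ?_
      gcongr
      rw [him]
      exact two_mul_rpow_le (abs_nonneg _) (by rw [abs_mul, abs_two])
    set z := ‖riemannZeta (1 + x + I * s.im)‖ with hz
    have hz0 : 0 ≤ z := norm_nonneg _
    have h3 : 1 ≤ (C / x) ^ 3 * z ^ 4 * (C * (2 * P)) := h341.trans (by gcongr)
    have h4 : x ^ 3 ≤ C ^ 4 * 2 * P * z ^ 4 := by
      have : (C / x) ^ 3 * z ^ 4 * (C * (2 * P)) = C ^ 4 * 2 * P * z ^ 4 / x ^ 3 := by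
        field_simp
      rw [this, le_div_iff₀ (by positivity), one_mul] at h3
      exact h3
    have h5 : (a ^ 4 * Q ^ 5) ^ 3 ≤ C ^ 4 * 2 * P * z ^ 4 := le_trans (by gcongr) h4
    refine le_of_pow_le_pow_left₀ (n := 4) (by norm_num) hz0 ?_
    rw [div_pow, div_le_iff₀ (by positivity)]
    have h6 : (a ^ 4 * Q ^ 5) ^ 3 * Q ≤ C ^ 4 * 2 * (P * Q) * z ^ 4 := by
      nlinarith
    rw [hPQ] at h6
    have h7 : 0 ≤ C ^ 4 * z ^ 4 := by positivity
    nlinarith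
  have hs : s = 1 + (s.re - 1 : ℝ) + I * s.im := by
    apply Complex.ext <;> simp
  rcases le_or_gt η (s.re - 1) with h | h
  · have := key (s.re - 1) h (by linarith)
    rw [← hs] at this
    refine le_trans ?_ this
    rw [div_mul_eq_mul_div]
    gcongr
    linarith
  · have k1 := key η le_rfl hη1
    set w : ℂ := 1 + η + I * s.im with hw
    have him : w.im = s.im := by simp [hw]
    have hre : w.re = 1 + η := by simp [hw]
    set S : Set ℂ := {z | z.im = s.im} ∩ {z | 1 ≤ z.re} ∩ {z | z.re ≤ 2} with hS
    have hconv : Convex ℝ S :=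
      (((convex_hyperplane Complex.imLm.isLinear _)).inter (convex_halfSpace_re_ge 1)).inter
        (convex_halfSpace_re_le 2)
    have mv := hconv.norm_image_sub_le_of_norm_deriv_le (f := riemannZeta) (C := C * P)
      (x := s) (y := w) ?_ ?_ ⟨⟨rfl, h1.le⟩, h2⟩ ⟨⟨him, by simp [hre]; exact hη0.le⟩, by
        simp [hre]; linarith⟩
    · have hd : ‖w - s‖ ≤ η := by
        have : w - s = ((1 + η - s.re : ℝ) : ℂ) := by
          apply Complex.ext <;> simp [hw]
        rw [this, Complex.norm_real, Real.norm_eq_abs, abs_le]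
        constructor <;> linarith
      have t1 : ‖riemannZeta w‖ ≤ ‖riemannZeta s‖ + C * P * η := by
        calc ‖riemannZeta w‖ = ‖riemannZeta s + (riemannZeta w - riemannZeta s)‖ := by ring_nf
          _ ≤ _ := norm_add_le _ _
          _ ≤ _ := by gcongr; exact mv.trans (by gcongr)
      have t2 : C * P * η = a ^ 3 / (4 * C) * Q ^ 4 := by
        rw [hη]
        calc C * P * (a ^ 4 * Q ^ 5) = (a * C) * a ^ 3 * Q ^ 4 * (P * Q) := by ring
          _ = _ := by rw [haC, hPQ]; ring
      have t3 : a ^ 3 * Q ^ 4 / (2 * C) = 2 * (a ^ 3 / (4 * C) * Q ^ 4) := by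
        field_simp; ring
      linarith
    · intro z hz
      have : z.im = s.im := hz.1.1
      exact zeta_diffAt (by rw [this]; linarith)
    · intro z hz
      have hzim : z.im = s.im := hz.1.1
      have h1 : 1 ≤ z.re := hz.1.2
      have h2 : z.re ≤ 2 := hz.2
      have := (hb z (by linarith) (by linarith) (by rw [hzim]; linarith)).2
      rwa [hzim] at this

/-- the function minus log-derivative of zeta minus zeta. -/
noncomputable def Fz (s : ℂ) : ℂ := -deriv riemannZeta s / riemannZeta s - riemannZeta s

lemma Fz_bound_large : ∃ C : ℝ, 0 < C ∧ ∀ s : ℂ, 1 < s.re → s.re ≤ 2 → 3 ≤ |s.im| →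
    ‖iteratedDeriv 3 Fz s‖ ≤ C * |s.im| ^ (1 / 2 : ℝ) := by
  obtain ⟨C, hC1, hb, -⟩ := zeta_bounds
  obtain ⟨c, hc, hl⟩ := zeta_lower
  set b : ℝ := min (c / (4 * C)) (1 / 320) with hbdef
  have hb0 : 0 < b := by positivity
  have hb1 : b ≤ 1 / 320 := min_le_right _ _
  have hb2 : b * (4 * C) ≤ c := by
    rw [← le_div_iff₀ (by positivity)]; exact min_le_left _ _
  refine ⟨6 * (4 * C / c + 2 * C) / b ^ 3, by positivity, fun s h1 h2 ht => ?_⟩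
  have hlow := hl s h1 h2 (by linarith)
  set P : ℝ := |s.im| ^ (1 / 40 : ℝ) with hP
  have hP1 : 1 ≤ P := Real.one_le_rpow (by linarith) (by norm_num)
  have hP0 : 0 < P := by linarith
  set Q := P⁻¹ with hQ
  have hQ0 : 0 < Q := by positivity
  have hQ1 : Q ≤ 1 := inv_le_one_of_one_le₀ hP1
  have hPQ : P * Q = 1 := mul_inv_cancel₀ hP0.ne'
  set ρ := b * Q ^ 5 with hρ
  have hρ0 : 0 < ρ := by positivity
  have hρ1 : ρ ≤ 1 / 320 := by
    have : Q ^ 5 ≤ 1 := pow_le_one₀ hQ0.le hQ1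
    nlinarith
  have hbz : ∀ z ∈ Metric.closedBall s ρ, 2 ≤ |z.im| ∧ ‖riemannZeta z‖ ≤ 2 * C * P ∧
      ‖deriv riemannZeta z‖ ≤ 2 * C * P := by
    intro z hz
    rw [Metric.mem_closedBall, dist_eq_norm] at hz
    obtain ⟨r1, r2, r3, r4⟩ := re_im_close hz
    have hz2 : 2 ≤ |z.im| := by linarith
    have hp : |z.im| ^ (1 / 40 : ℝ) ≤ 2 * P := two_mul_rpow_le (abs_nonneg _) (by linarith)
    obtain ⟨q1, q2⟩ := hb z (by linarith) (by linarith) hz2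
    refine ⟨hz2, q1.trans ?_, q2.trans ?_⟩
    · calc _ ≤ C * (2 * P) := by gcongr
        _ = _ := by ring
    · calc _ ≤ C * (2 * P) := by gcongr
        _ = _ := by ring
  have hlz : ∀ z ∈ Metric.closedBall s ρ, c / 2 * Q ^ 4 ≤ ‖riemannZeta z‖ := by
    intro z hz
    have mv := (convex_closedBall s ρ).norm_image_sub_le_of_norm_deriv_le (f := riemannZeta)
      (C := 2 * C * P) (x := z) (y := s) (fun w hw => zeta_diffAt (by linarith [(hbz w hw).1]))
      (fun w hw => (hbz w hw).2.2) hz (Metric.mem_closedBall_self hρ0.le)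
    have hd : ‖s - z‖ ≤ ρ := by
      rw [norm_sub_rev]; rwa [Metric.mem_closedBall, dist_eq_norm] at hz
    have t1 : ‖riemannZeta s‖ ≤ ‖riemannZeta z‖ + 2 * C * P * ρ := by
      calc ‖riemannZeta s‖ = ‖riemannZeta z + (riemannZeta s - riemannZeta z)‖ := by ring_nf
        _ ≤ _ := norm_add_le _ _
        _ ≤ _ := by gcongr; exact mv.trans (by gcongr)
    have t2 : 2 * C * P * ρ ≤ c / 2 * Q ^ 4 := by
      have : 2 * C * P * ρ = (b * (4 * C)) / 2 * Q ^ 4 * (P * Q) := by rw [hρ]; ring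
      rw [this, hPQ, mul_one]; gcongr
    linarith
  have hF : ∀ z ∈ Metric.closedBall s ρ, ‖Fz z‖ ≤ (4 * C / c + 2 * C) * P ^ 5 := by
    intro z hz
    obtain ⟨-, q1, q2⟩ := hbz z hz
    have hl := hlz z hz
    have hpos : 0 < c / 2 * Q ^ 4 := by positivity
    calc ‖Fz z‖ ≤ ‖-deriv riemannZeta z / riemannZeta z‖ + ‖riemannZeta z‖ := norm_sub_le _ _
      _ ≤ (2 * C * P) / (c / 2 * Q ^ 4) + 2 * C * P := by
          rw [norm_div, norm_neg]; gcongr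
      _ = 4 * C / c * P ^ 5 + 2 * C * P := by
          rw [hQ]; field_simp; ring
      _ ≤ _ := by
          rw [add_mul]
          have : P ≤ P ^ 5 := le_self_pow₀ hP1 (by norm_num)
          gcongr
  have hdiff : DiffContOnCl ℂ Fz (Metric.ball s ρ) := by
    apply DifferentiableOn.diffContOnCl
    rw [closure_ball _ hρ0.ne']
    intro z hz
    have hne : riemannZeta z ≠ 0 := by
      rw [← norm_pos_iff]; exact lt_of_lt_of_le (by positivity) (hlz z hz)
    have hz1 : z ≠ 1 := by
      rintro rfl; have := (hbz 1 hz).1; simp at this; linarith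
    have hd : DifferentiableAt ℂ riemannZeta z := differentiableAt_riemannZeta hz1
    have hdd : DifferentiableAt ℂ (deriv riemannZeta) z := by
      have : AnalyticAt ℂ riemannZeta z := by
        have hop : IsOpen ({1}ᶜ : Set ℂ) := isOpen_compl_singleton
        exact (show DifferentiableOn ℂ riemannZeta {1}ᶜ from fun w hw =>
          (differentiableAt_riemannZeta hw).differentiableWithinAt).analyticAt (hop.mem_nhds hz1)
      exact this.deriv.differentiableAt
    exact ((hdd.neg.div hd hne).sub hd).differentiableWithinAt
  have := norm_iteratedDeriv_le_of_forall_mem_sphere_norm_le (c := s) (R := ρ)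
    (C := (4 * C / c + 2 * C) * P ^ 5) (f := Fz) 3 hρ0 hdiff
    (fun z hz => hF z (Metric.sphere_subset_closedBall hz))
  refine this.trans (le_of_eq ?_)
  have hP20 : |s.im| ^ (1 / 2 : ℝ) = P ^ 20 := by
    rw [hP, ← Real.rpow_natCast, ← Real.rpow_mul (abs_nonneg _)]; norm_num
  rw [hP20, hρ, hQ]
  simp only [Nat.factorial]
  push_cast
  field_simp

lemma zeta1_ne_zero {s : ℂ} (hs : 1 ≤ s.re) : riemannZeta₁ s ≠ 0 := by
  rcases eq_or_ne s 1 with rfl | h1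
  · simp
  · intro h
    apply riemannZeta_ne_zero_of_one_le_re hs
    rw [riemannZeta_eq_inv_sub_mul h1, h, mul_zero]

noncomputable def Gz (s : ℂ) : ℂ := -deriv riemannZeta₁ s / riemannZeta₁ s - riemannZeta₀ s

lemma Fz_eq_Gz {s : ℂ} (hs : 1 < s.re) : Fz s = Gz s := by
  have h1 : s ≠ 1 := by rintro rfl; simp at hs
  have h2 := zeta1_ne_zero hs.le
  have h3 : s - 1 ≠ 0 := sub_ne_zero.2 h1
  unfold Fz Gz
  rw [deriv_riemannZeta_eq_neg_inv_sub_sq_mul_add h1, riemannZeta_eq_inv_sub_mul h1]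
  have : riemannZeta₀ s = (s - 1)⁻¹ * riemannZeta₁ s - (s - 1)⁻¹ := by
    rw [← riemannZeta_eq_inv_sub_mul h1, riemannZeta_eq_inv_sub_add h1]; ring
  rw [this]
  field_simp
  ring

lemma Fz_bound_small : ∃ C : ℝ, 0 < C ∧ ∀ s : ℂ, 1 < s.re → s.re ≤ 2 → |s.im| ≤ 3 →
    ‖iteratedDeriv 3 Fz s‖ ≤ C := by
  have hK : IsCompact (Set.Icc (1 : ℝ) 2 ×ℂ Set.Icc (-3 : ℝ) 3) :=
    isCompact_Icc.reProdIm isCompact_Icc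
  have hcont : ContinuousOn (iteratedDeriv 3 Gz) (Set.Icc (1 : ℝ) 2 ×ℂ Set.Icc (-3 : ℝ) 3) := by
    intro s hs
    have h1 : 1 ≤ s.re := (Complex.mem_reProdIm.1 hs).1.1
    have a1 : AnalyticAt ℂ riemannZeta₁ s := differentiable_riemannZeta₁.analyticAt s
    have a0 : AnalyticAt ℂ riemannZeta₀ s := differentiable_riemannZeta₀.analyticAt s
    have aG : AnalyticAt ℂ Gz s := (a1.deriv.neg.div a1 (zeta1_ne_zero h1)).sub a0
    rw [iteratedDeriv_eq_iterate]
    exact aG.deriv.deriv.deriv.continuousAt.continuousWithinAt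
  obtain ⟨B, hB⟩ := hK.exists_bound_of_continuousOn hcont
  refine ⟨|B| + 1, by positivity, fun s h1 h2 h3 => ?_⟩
  have : Fz =ᶠ[𝓝 s] Gz := by
    have hV : IsOpen {s : ℂ | 1 < s.re} := isOpen_lt continuous_const Complex.continuous_re
    filter_upwards [hV.mem_nhds h1] with z hz using Fz_eq_Gz hz
  rw [this.iteratedDeriv_eq]
  refine (hB s (Complex.mem_reProdIm.2 ⟨⟨h1.le, h2⟩, abs_le.1 h3⟩)).trans ?_
  linarith [le_abs_self B]

lemma Fz_bound : ∃ C : ℝ, 0 < C ∧ ∀ s : ℂ, 1 < s.re → s.re ≤ 2 →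
    ‖iteratedDeriv 3 Fz s‖ ≤ C * (1 + |s.im|) ^ (1 / 2 : ℝ) := by
  obtain ⟨C1, h1, b1⟩ := Fz_bound_large
  obtain ⟨C2, h2, b2⟩ := Fz_bound_small
  refine ⟨C1 + C2, by positivity, fun s hs hs2 => ?_⟩
  have hp : 1 ≤ (1 + |s.im|) ^ (1 / 2 : ℝ) :=
    Real.one_le_rpow (by linarith [abs_nonneg s.im]) (by norm_num)
  rcases le_total 3 |s.im| with h | h
  · refine (b1 s hs hs2 h).trans ?_
    gcongr <;> linarith
  · refine (b2 s hs hs2 h).trans ?_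
    nlinarith

end

section

open Complex Filter Topology MeasureTheory ArithmeticFunction
open scoped LSeries.notation

noncomputable def aR (n : ℕ) : ℝ := (vonMangoldt n - 1) * Real.log n ^ 3

noncomputable def fz (n : ℕ) : ℂ := (vonMangoldt n : ℂ) - 1

lemma fz_summable {s : ℂ} (hs : 1 < s.re) : LSeriesSummable fz s := by
  have h1 := LSeriesSummable_vonMangoldt hs
  have h2 := (LSeriesSummable_one_iff (s := s)).2 hs
  exact h1.sub h2

lemma fz_LSeries {s : ℂ} (hs : 1 < s.re) : LSeries fz s = Fz s := by
  have h1 := LSeriesSummable_vonMangoldt hs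
  have h2 := (LSeriesSummable_one_iff (s := s)).2 hs
  have := LSeries_sub h1 h2
  rw [LSeries_vonMangoldt_eq_deriv_riemannZeta_div hs, LSeries_one_eq_riemannZeta hs] at this
  exact this

lemma fz_absc {s : ℂ} (hs : 1 < s.re) : LSeries.abscissaOfAbsConv fz < s.re := by
  refine lt_of_le_of_lt (b := ((1 : ℝ) : EReal)) ?_ (by exact_mod_cast hs)
  refine LSeries.abscissaOfAbsConv_le_of_forall_lt_LSeriesSummable fun y hy => ?_
  exact fz_summable (by simpa using hy)

lemma gz_apply (n : ℕ) : LSeries.logMul^[3] fz n = (aR n : ℂ) := by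
  simp [LSeries.logMul, fz, aR]
  ring

lemma gz_summable {s : ℂ} (hs : 1 < s.re) : LSeriesSummable (LSeries.logMul^[3] fz) s := by
  apply LSeriesSummable_of_abscissaOfAbsConv_lt_re
  rw [LSeries.absicssaOfAbsConv_logPowMul]
  exact fz_absc hs

lemma gz_LSeries {s : ℂ} (hs : 1 < s.re) :
    LSeries (LSeries.logMul^[3] fz) s = -iteratedDeriv 3 Fz s := by
  have h1 := LSeries_iteratedDeriv (f := fz) 3 (fz_absc hs)
  have h2 : LSeries fz =ᶠ[𝓝 s] Fz := by
    have hV : IsOpen {s : ℂ | 1 < s.re} := isOpen_lt continuous_const Complex.continuous_re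
    filter_upwards [hV.mem_nhds hs] with z hz using fz_LSeries hz
  rw [h2.iteratedDeriv_eq] at h1
  rw [h1]; ring

noncomputable def kk (u : ℝ) : ℂ := ((max (1 - u) 0 : ℝ) : ℂ)

lemma kk_hasMellin {s : ℂ} (hs : 0 < s.re) : HasMellin kk s (1 / s - 1 / (s + 1)) := by
  have h1 := hasMellin_one_Ioc hs
  have h2 := hasMellin_cpow_Ioc 1 (s := s) (by simp; linarith)
  have h3 := hasMellin_sub h1.1 h2.1
  rw [h1.2, h2.2] at h3
  have heq : ∀ t ∈ Set.Ioi (0 : ℝ), (t : ℂ) ^ (s - 1) • ((Set.Ioc (0 : ℝ) 1).indicator (fun _ => (1 : ℂ)) t -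
      (Set.Ioc (0 : ℝ) 1).indicator (fun t : ℝ => (t : ℂ) ^ (1 : ℂ)) t) = (t : ℂ) ^ (s - 1) • kk t := by
    intro t ht
    congr 1
    unfold kk
    by_cases h : t ≤ 1
    · have hm : t ∈ Set.Ioc (0 : ℝ) 1 := ⟨ht, h⟩
      rw [Set.indicator_of_mem hm, Set.indicator_of_mem hm, max_eq_left (by linarith)]
      simp
    · have hm : t ∉ Set.Ioc (0 : ℝ) 1 := fun h' => h h'.2
      rw [Set.indicator_of_notMem hm, Set.indicator_of_notMem hm, max_eq_right (by linarith)]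
      simp
  constructor
  · exact (integrableOn_congr_fun heq measurableSet_Ioi).1 h3.1
  · rw [← h3.2]
    exact (setIntegral_congr_fun measurableSet_Ioi heq).symm

noncomputable def MM (s : ℂ) : ℂ := 1 / s - 1 / (s + 1)

lemma MM_bound {σ : ℝ} (hσ : 1 ≤ σ) (y : ℝ) : ‖MM (σ + y * I)‖ ≤ 2 * (1 + |y|) ^ (-2 : ℝ) := by
  have hre : ((σ : ℂ) + y * I).re = σ := by simp
  have hre1 : ((σ : ℂ) + y * I + 1).re = σ + 1 := by simp
  have him : ((σ : ℂ) + y * I).im = y := by simp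
  have him1 : ((σ : ℂ) + y * I + 1).im = y := by simp
  set s : ℂ := (σ : ℂ) + y * I with hs
  have h0 : s ≠ 0 := by intro h; rw [h] at hre; simp at hre; linarith
  have h1 : s + 1 ≠ 0 := by intro h; rw [h] at hre1; simp at hre1; linarith
  have e : MM s = 1 / (s * (s + 1)) := by unfold MM; field_simp; ring
  have a1 : 1 + y ^ 2 ≤ ‖s‖ ^ 2 := by
    rw [Complex.sq_norm, Complex.normSq_apply, hre, him]; nlinarith
  have a2 : 1 + y ^ 2 ≤ ‖s + 1‖ ^ 2 := by
    rw [Complex.sq_norm, Complex.normSq_apply, hre1, him1]; nlinarith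
  have a3 : (1 + y ^ 2) ≤ ‖s‖ * ‖s + 1‖ := by
    refine le_of_pow_le_pow_left₀ (n := 2) (by norm_num) (by positivity) ?_
    rw [mul_pow, sq]
    gcongr
  have a4 : (1 + |y|) ^ 2 ≤ 2 * (1 + y ^ 2) := by
    rw [← sq_abs y]; nlinarith [sq_nonneg (1 - |y|)]
  rw [e, norm_div, norm_one, norm_mul, Real.rpow_neg (by positivity), ← div_eq_mul_inv,
    div_le_div_iff₀ (by positivity) (by positivity)]
  norm_cast
  nlinarith

lemma MM_cont {σ : ℝ} (hσ : 1 ≤ σ) : Continuous fun y : ℝ => MM (σ + y * I) := by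
  unfold MM
  have : ∀ y : ℝ, (σ + y * I : ℂ) ≠ 0 := by
    intro y h
    have := congrArg Complex.re h
    simp at this; linarith
  have : ∀ y : ℝ, (σ + y * I + 1 : ℂ) ≠ 0 := by
    intro y h
    have := congrArg Complex.re h
    simp at this; linarith
  fun_prop (disch := assumption)

lemma int_aux {r : ℝ} (hr : 1 < r) : Integrable fun y : ℝ => (1 + |y|) ^ (-r) := by
  have := integrable_one_add_norm (E := ℝ) (μ := volume) (r := r) (by simpa using hr)
  simpa using this

lemma MM_int {σ : ℝ} (hσ : 1 ≤ σ) : Integrable fun y : ℝ => MM (σ + y * I) := by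
  refine Integrable.mono' ((int_aux (r := 2) (by norm_num)).const_mul 2)
    (MM_cont hσ).aestronglyMeasurable ?_
  exact Eventually.of_forall fun y => MM_bound hσ y

lemma kk_inv {σ : ℝ} (hσ : 1 ≤ σ) {u : ℝ} (hu : 0 < u) :
    kk u = (1 / (2 * Real.pi)) • ∫ y : ℝ, (u : ℂ) ^ (-(σ + y * I)) * MM (σ + y * I) := by
  have hM : ∀ y : ℝ, mellin kk (σ + y * I) = MM (σ + y * I) := fun y =>
    (kk_hasMellin (s := σ + y * I) (by simp; linarith)).2
  have := mellinInv_mellin_eq σ kk hu (kk_hasMellin (s := σ) (by simp; linarith)).1 (by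
    unfold VerticalIntegrable
    simp_rw [hM]
    exact MM_int hσ) (by unfold kk; fun_prop)
  rw [← this]
  unfold mellinInv
  simp_rw [hM, smul_eq_mul]

lemma perron {σ : ℝ} (hσ : 1 < σ) {x : ℝ} (hx : 0 < x) :
    HasSum (fun n : ℕ => (aR n : ℂ) * kk (n / x)) ((1 / (2 * Real.pi)) •
      ∫ y : ℝ, (x : ℂ) ^ (σ + y * I : ℂ) * LSeries (LSeries.logMul^[3] fz) (σ + y * I)
        * MM (σ + y * I)) := by
  set g := LSeries.logMul^[3] fz with hg
  have hre : ∀ y : ℝ, ((σ : ℂ) + y * I).re = σ := by intro y; simp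
  set F : ℕ → ℝ → ℂ := fun n y =>
    (x : ℂ) ^ (σ + y * I : ℂ) * LSeries.term g (σ + y * I) n * MM (σ + y * I) with hF
  have hnorm : ∀ n y, ‖F n y‖ = x ^ σ * ‖LSeries.term g σ n‖ * ‖MM (σ + y * I)‖ := by
    intro n y
    simp only [hF, norm_mul]
    congr 2
    · rw [Complex.norm_cpow_eq_rpow_re_of_pos hx, hre]
    · rw [LSeries.norm_term_eq, LSeries.norm_term_eq, hre]; simp
  have hcont : ∀ n, Continuous (F n) := by
    intro n
    have hx' : (x : ℂ) ≠ 0 := by exact_mod_cast hx.ne'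
    have h1 : Continuous fun y : ℝ => (x : ℂ) ^ (σ + y * I : ℂ) :=
      Continuous.const_cpow (by fun_prop) (Or.inl hx')
    have h2 : Continuous fun y : ℝ => LSeries.term g (σ + y * I) n := by
      rcases eq_or_ne n 0 with rfl | hn
      · simpa using continuous_const
      · have hn' : (n : ℂ) ≠ 0 := by exact_mod_cast hn
        have h3 : Continuous fun y : ℝ => (n : ℂ) ^ (σ + y * I : ℂ) :=
          Continuous.const_cpow (by fun_prop) (Or.inl hn')
        simp_rw [LSeries.term_of_ne_zero hn]
        exact continuous_const.div h3 fun y => by simp [Complex.cpow_eq_zero_iff, hn]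
    exact (h1.mul h2).mul (MM_cont hσ.le)
  have hint : ∀ n, Integrable (F n) := by
    intro n
    refine Integrable.mono' ((MM_int hσ.le).norm.const_mul (x ^ σ * ‖LSeries.term g σ n‖))
      (hcont n).aestronglyMeasurable (Eventually.of_forall fun y => (hnorm n y).le)
  have hsum : Summable fun n => ∫ y, ‖F n y‖ := by
    simp_rw [hnorm, integral_const_mul]
    have : Summable fun n => ‖LSeries.term g σ n‖ :=
      (gz_summable (s := σ) (by simpa using hσ)).norm
    exact (this.mul_left _).mul_right _
  have key := hasSum_integral_of_summable_integral_norm hint hsum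
  have key2 := key.const_smul (1 / (2 * Real.pi))
  have e1 : (fun y => ∑' n, F n y) = fun y : ℝ => (x : ℂ) ^ (σ + y * I : ℂ) *
      LSeries g (σ + y * I) * MM (σ + y * I) := by
    funext y
    simp only [hF]
    rw [tsum_mul_right, tsum_mul_left]
    rfl
  rw [e1] at key2
  convert! key2 using 1
  funext n
  rcases eq_or_ne n 0 with rfl | hn
  · simp [hF, aR]
  · have hn0 : (0 : ℝ) < n := by exact_mod_cast Nat.pos_of_ne_zero hn
    rw [kk_inv hσ.le (div_pos hn0 hx), mul_smul_comm, ← integral_const_mul]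
    congr 2
    funext y
    simp only [hF]
    rw [LSeries.term_of_ne_zero hn, hg, gz_apply]
    have : (((n : ℝ) / x : ℝ) : ℂ) ^ (-(σ + y * I) : ℂ) =
        (x : ℂ) ^ (σ + y * I : ℂ) / (n : ℂ) ^ (σ + y * I : ℂ) := by
      rw [show ((n : ℝ) / x) = (n : ℝ) * x⁻¹ by rfl, Complex.ofReal_mul,
        Complex.mul_cpow_ofReal_nonneg hn0.le (by positivity), Complex.ofReal_inv, Complex.cpow_neg,
        Complex.cpow_neg, Complex.inv_cpow, inv_inv]
      · push_cast; ring
      · rw [Complex.arg_ofReal_of_nonneg hx.le]; exact Real.pi_pos.ne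
    rw [this]; ring

lemma T_bound : ∃ C : ℝ, 0 < C ∧ ∀ x : ℝ, 3 ≤ x →
    |∑ n ∈ Finset.Ioc 0 ⌊x⌋₊, aR n * (x - n)| ≤ C * x ^ 2 := by
  obtain ⟨C, hC, hb⟩ := Fz_bound
  set J : ℝ := ∫ y : ℝ, (1 + |y|) ^ (-(3 / 2) : ℝ) with hJ
  have hJ0 : 0 ≤ J := integral_nonneg fun y => by positivity
  refine ⟨3 * (C * 2 * J) + 1, by positivity, fun x hx => ?_⟩
  have hx0 : 0 < x := by linarith
  have hlog : 1 ≤ Real.log x := by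
    rw [Real.le_log_iff_exp_le hx0]
    linarith [Real.exp_one_lt_three]
  set σ : ℝ := 1 + 1 / Real.log x with hσ
  have hσ1 : 1 < σ := by rw [hσ]; have : 0 < 1 / Real.log x := by positivity
                         linarith
  have hσ2 : σ ≤ 2 := by
    have : 1 / Real.log x ≤ 1 := by rw [div_le_one (by linarith)]; exact hlog
    linarith
  have hxs : x ^ σ ≤ 3 * x := by
    have : x ^ σ = x * Real.exp 1 := by
      rw [hσ, Real.rpow_add hx0, Real.rpow_one, Real.rpow_def_of_pos hx0]
      congr 2
      field_simp
    rw [this]; nlinarith [Real.exp_one_lt_three]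
  have hp := perron hσ1 hx0
  have e1 : ∑' n : ℕ, (aR n : ℂ) * kk (n / x) =
      ((∑ n ∈ Finset.Ioc 0 ⌊x⌋₊, aR n * (x - n)) / x : ℝ) := by
    rw [tsum_eq_sum (s := Finset.Ioc 0 ⌊x⌋₊)]
    · push_cast
      rw [Finset.sum_div]
      refine Finset.sum_congr rfl fun n hn => ?_
      have hnx : (n : ℝ) ≤ x := (Nat.le_floor_iff hx0.le).1 (Finset.mem_Ioc.1 hn).2
      unfold kk
      have : (n : ℝ) / x ≤ 1 := by rw [div_le_one hx0]; exact hnx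
      rw [max_eq_left (by linarith)]
      have hxc : (x : ℂ) ≠ 0 := by exact_mod_cast hx0.ne'
      push_cast
      field_simp
    · intro n hn
      rcases Nat.eq_zero_or_pos n with rfl | h0
      · simp [aR]
      · have : x < n := by
          by_contra h
          exact hn (Finset.mem_Ioc.2 ⟨h0, (Nat.le_floor_iff hx0.le).2 (not_lt.1 h)⟩)
        unfold kk
        have : 1 ≤ (n : ℝ) / x := by rw [le_div_iff₀ hx0]; linarith
        rw [max_eq_right (by linarith)]; simp
  have e2 : ‖(∑' n : ℕ, (aR n : ℂ) * kk (n / x))‖ ≤ x ^ σ * (C * 2 * J) := by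
    rw [hp.tsum_eq, norm_smul]
    have hpi : ‖1 / (2 * Real.pi)‖ ≤ 1 := by
      rw [Real.norm_of_nonneg (by positivity), div_le_one (by positivity)]
      linarith [Real.pi_gt_three]
    have hI : ‖∫ y : ℝ, (x : ℂ) ^ (σ + y * I : ℂ) * LSeries (LSeries.logMul^[3] fz) (σ + y * I)
        * MM (σ + y * I)‖ ≤ ∫ y : ℝ, x ^ σ * (C * 2) * (1 + |y|) ^ (-(3 / 2) : ℝ) := by
      refine norm_integral_le_of_norm_le ((int_aux (by norm_num)).const_mul _)
        (Eventually.of_forall fun y => ?_)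
      have hre : ((σ : ℂ) + y * I).re = σ := by simp
      have him : ((σ : ℂ) + y * I).im = y := by simp
      rw [norm_mul, norm_mul, Complex.norm_cpow_eq_rpow_re_of_pos hx0, hre,
        gz_LSeries (by rw [hre]; exact hσ1), norm_neg]
      have q1 := hb (σ + y * I) (by rw [hre]; exact hσ1) (by rw [hre]; exact hσ2)
      rw [him] at q1
      calc _ ≤ x ^ σ * (C * (1 + |y|) ^ (1 / 2 : ℝ)) * (2 * (1 + |y|) ^ (-2 : ℝ)) := by
            gcongr
            exact MM_bound hσ1.le y
        _ = x ^ σ * (C * 2) * ((1 + |y|) ^ (1 / 2 : ℝ) * (1 + |y|) ^ (-2 : ℝ)) := by ring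
        _ = _ := by
            rw [← Real.rpow_add (by positivity)]; norm_num
    rw [integral_const_mul] at hI
    calc _ ≤ 1 * (x ^ σ * (C * 2) * J) := by gcongr
      _ = _ := by ring
  rw [e1, Complex.norm_real, Real.norm_eq_abs, abs_div, abs_of_pos hx0, div_le_iff₀ hx0] at e2
  refine e2.trans ?_
  calc x ^ σ * (C * 2 * J) * x ≤ 3 * x * (C * 2 * J) * x := by gcongr
    _ ≤ _ := by nlinarith [sq_nonneg x]

end

section

open Filter Topology MeasureTheory ArithmeticFunction

lemma aR_ge (n : ℕ) {y : ℝ} (hn : (n : ℝ) ≤ y) (hy : 1 ≤ y) : -(Real.log y ^ 3) ≤ aR n := by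
  unfold aR
  rcases Nat.eq_zero_or_pos n with rfl | h
  · simp
    have := Real.log_nonneg hy; positivity
  · have h1 : (1:ℝ) ≤ n := by exact_mod_cast h
    have h2 := Real.log_nonneg h1
    have h3 : Real.log n ≤ Real.log y := Real.log_le_log (by linarith) hn
    have h4 : Real.log n ^ 3 ≤ Real.log y ^ 3 := by gcongr
    have h5 : (0:ℝ) ≤ vonMangoldt n := vonMangoldt_nonneg
    have h6 : 0 ≤ Real.log n ^ 3 := by positivity
    nlinarith

noncomputable def SR (x : ℝ) : ℝ := ∑ n ∈ Finset.Ioc 0 ⌊x⌋₊, aR n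

noncomputable def TR (x : ℝ) : ℝ := ∑ n ∈ Finset.Ioc 0 ⌊x⌋₊, aR n * (x - n)

lemma card_aux {x y : ℝ} (hx : 0 ≤ x) (hxy : x ≤ y) :
    ((Finset.Ioc ⌊x⌋₊ ⌊y⌋₊).card : ℝ) ≤ y - x + 1 := by
  have h1 : ⌊x⌋₊ ≤ ⌊y⌋₊ := Nat.floor_mono hxy
  rw [Nat.card_Ioc, Nat.cast_sub h1]
  have := Nat.floor_le (hx.trans hxy)
  have := Nat.lt_floor_add_one x
  linarith

lemma TR_split {x y : ℝ} (hxy : x ≤ y) :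
    TR y - TR x = (y - x) * SR x + ∑ n ∈ Finset.Ioc ⌊x⌋₊ ⌊y⌋₊, aR n * (y - n) := by
  have h1 : ⌊x⌋₊ ≤ ⌊y⌋₊ := Nat.floor_mono hxy
  have h2 := Finset.sum_Ioc_consecutive (fun n : ℕ => aR n * (y - n)) (Nat.zero_le _) h1
  unfold TR SR
  rw [← h2, Finset.mul_sum]
  have : ∑ n ∈ Finset.Ioc 0 ⌊x⌋₊, aR n * (y - n) - ∑ n ∈ Finset.Ioc 0 ⌊x⌋₊, aR n * (x - n)
    = ∑ n ∈ Finset.Ioc 0 ⌊x⌋₊, (y - x) * aR n := by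
    rw [← Finset.sum_sub_distrib]
    exact Finset.sum_congr rfl fun n _ => by ring
  linarith

lemma TR_split' {x y : ℝ} (hxy : x ≤ y) :
    TR y - TR x = (y - x) * SR y + ∑ n ∈ Finset.Ioc ⌊x⌋₊ ⌊y⌋₊, aR n * (x - n) := by
  have h1 : ⌊x⌋₊ ≤ ⌊y⌋₊ := Nat.floor_mono hxy
  have h2 := Finset.sum_Ioc_consecutive (fun n : ℕ => aR n * (x - n)) (Nat.zero_le _) h1
  unfold TR SR
  rw [Finset.mul_sum]
  have : ∑ n ∈ Finset.Ioc 0 ⌊y⌋₊, aR n * (y - n) - ∑ n ∈ Finset.Ioc 0 ⌊y⌋₊, aR n * (x - n)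
    = ∑ n ∈ Finset.Ioc 0 ⌊y⌋₊, (y - x) * aR n := by
    rw [← Finset.sum_sub_distrib]
    exact Finset.sum_congr rfl fun n _ => by ring
  linarith

lemma SR_bound_h {C x h : ℝ} (hT : ∀ x : ℝ, 3 ≤ x → |TR x| ≤ C * x ^ 2) (hC : 0 < C)
    (hx : 6 ≤ x) (h1 : 1 ≤ h) (h2 : h ≤ x / 2) :
    |SR x| ≤ 5 * C * x ^ 2 / h + 2 * h * Real.log (2 * x) ^ 3 := by
  have hh : 0 < h := by linarith
  have hL : Real.log x ^ 3 ≤ Real.log (2 * x) ^ 3 := by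
    have := Real.log_nonneg (show 1 ≤ x by linarith)
    gcongr; linarith
  have hL0 : 0 ≤ Real.log (2 * x) := Real.log_nonneg (by linarith)
  have t0 := abs_le.1 (hT x (by linarith))
  have t1 := abs_le.1 (hT (x + h) (by linarith))
  have t2 := abs_le.1 (hT (x - h) (by linarith))
  have e1 : C * (x + h) ^ 2 ≤ C * (4 * x ^ 2) := by gcongr; nlinarith
  have e2 : C * (x - h) ^ 2 ≤ C * (4 * x ^ 2) := by gcongr; nlinarith
  have up := TR_split (x := x) (y := x + h) (by linarith)
  have lo := TR_split' (x := x - h) (y := x) (by linarith)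
  have u1 : -(2 * h * (h * Real.log (2 * x) ^ 3)) ≤
      ∑ n ∈ Finset.Ioc ⌊x⌋₊ ⌊x + h⌋₊, aR n * (x + h - n) := by
    have c := card_aux (x := x) (y := x + h) (by linarith) (by linarith)
    have : ((Finset.Ioc ⌊x⌋₊ ⌊x + h⌋₊).card : ℝ) * (-(h * Real.log (2 * x) ^ 3)) ≤
      ∑ n ∈ Finset.Ioc ⌊x⌋₊ ⌊x + h⌋₊, aR n * (x + h - n) := by
      rw [← nsmul_eq_mul]
      refine Finset.card_nsmul_le_sum _ _ _ fun n hn => ?_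
      rw [Finset.mem_Ioc] at hn
      have a1 : x < n := (Nat.floor_lt (by linarith)).1 hn.1
      have a2 : (n : ℝ) ≤ x + h := (Nat.le_floor_iff (by linarith)).1 hn.2
      have a3 := aR_ge n (show (n : ℝ) ≤ 2 * x by linarith) (by linarith)
      have a4 : 0 ≤ Real.log (2 * x) ^ 3 := by positivity
      nlinarith
    have a4 : 0 ≤ h * Real.log (2 * x) ^ 3 := by positivity
    nlinarith
  have l1 : ∑ n ∈ Finset.Ioc ⌊x - h⌋₊ ⌊x⌋₊, aR n * (x - h - n) ≤
      2 * h * (h * Real.log (2 * x) ^ 3) := by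
    have c := card_aux (x := x - h) (y := x) (by linarith) (by linarith)
    have : ∑ n ∈ Finset.Ioc ⌊x - h⌋₊ ⌊x⌋₊, aR n * (x - h - n) ≤
      ((Finset.Ioc ⌊x - h⌋₊ ⌊x⌋₊).card : ℝ) * (h * Real.log (2 * x) ^ 3) := by
      rw [← nsmul_eq_mul]
      refine Finset.sum_le_card_nsmul _ _ _ fun n hn => ?_
      rw [Finset.mem_Ioc] at hn
      have a1 : x - h < n := (Nat.floor_lt (by linarith)).1 hn.1
      have a2 : (n : ℝ) ≤ x := (Nat.le_floor_iff (by linarith)).1 hn.2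
      have a3 := aR_ge n (show (n : ℝ) ≤ 2 * x by linarith) (by linarith)
      have a4 : 0 ≤ Real.log (2 * x) ^ 3 := by positivity
      nlinarith
    have a4 : 0 ≤ h * Real.log (2 * x) ^ 3 := by positivity
    nlinarith
  have key : h * |SR x| ≤ 5 * C * x ^ 2 + 2 * h * (h * Real.log (2 * x) ^ 3) := by
    rw [← abs_of_pos hh, ← abs_mul, abs_of_pos hh, abs_le]
    constructor <;> nlinarith
  rw [div_add' _ _ _ hh.ne', le_div_iff₀ hh]
  linarith

lemma SR_bound : ∃ C X : ℝ, 0 < C ∧ 3 ≤ X ∧ ∀ x : ℝ, X ≤ x →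
    |SR x| ≤ C * x * √(Real.log x) ^ 3 := by
  obtain ⟨C, hC, hT⟩ := T_bound
  have ev : ∀ᶠ x : ℝ in atTop, Real.log x ^ 2 ≤ x := by
    have := (Real.isLittleO_pow_log_id_atTop (n := 2)).bound (show (0:ℝ) < 1 by norm_num)
    filter_upwards [this, eventually_ge_atTop 0] with x hx h0
    simpa [abs_of_nonneg h0] using hx
  obtain ⟨X, hX⟩ := eventually_atTop.1 ev
  refine ⟨5 * C + 16, max X (Real.exp 4), by positivity, ?_, fun x hx => ?_⟩
  · refine le_max_of_le_right ?_
    have := Real.add_one_le_exp (4:ℝ)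
    linarith
  have h1 := hX x ((le_max_left _ _).trans hx)
  have h2 : Real.exp 4 ≤ x := (le_max_right _ _).trans hx
  have hx0 : 0 < x := (Real.exp_pos 4).trans_le h2
  have h3 : 4 ≤ Real.log x := (Real.le_log_iff_exp_le hx0).2 h2
  have h6 : 6 ≤ x := by
    have : (16:ℝ) ≤ Real.log x ^ 2 := by nlinarith
    linarith
  set r := √(Real.log x) with hr
  have hr2 : r ^ 2 = Real.log x := Real.sq_sqrt (by linarith)
  have hr0 : 2 ≤ r := by rw [hr]; exact Real.le_sqrt_of_sq_le (by linarith)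
  have hr3 : r ^ 3 ≤ x := by
    refine le_trans ?_ h1
    rw [← hr2]; nlinarith [pow_pos (show 0 < r by linarith) 3]
  have hr3' : 2 ≤ r ^ 3 := by
    calc (2:ℝ) ≤ 2 ^ 3 := by norm_num
      _ ≤ _ := by gcongr
  have hl : Real.log (2 * x) ≤ 2 * r ^ 2 := by
    rw [hr2, Real.log_mul (by norm_num) hx0.ne']
    have := Real.log_two_lt_d9
    linarith
  have hl0 : 0 ≤ Real.log (2 * x) := Real.log_nonneg (by linarith)
  have := SR_bound_h hT hC h6 (h := x / r ^ 3) (by rw [le_div_iff₀ (by positivity)]; linarith)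
    (by gcongr)
  refine this.trans ?_
  calc 5 * C * x ^ 2 / (x / r ^ 3) + 2 * (x / r ^ 3) * Real.log (2 * x) ^ 3
      ≤ 5 * C * x ^ 2 / (x / r ^ 3) + 2 * (x / r ^ 3) * (2 * r ^ 2) ^ 3 := by gcongr
    _ = _ := by field_simp; ring

end

section

open Filter Topology MeasureTheory ArithmeticFunction Asymptotics

lemma SR_bound_all : ∃ C : ℝ, 0 < C ∧ ∀ t : ℝ, 2 ≤ t → |SR t| ≤ C * (t * Real.log t ^ 2) := by
  obtain ⟨C, X, hC, hX, h⟩ := SR_bound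
  set B : ℝ := ∑ n ∈ Finset.Ioc 0 ⌊X⌋₊, |aR n| with hB
  have hB0 : 0 ≤ B := Finset.sum_nonneg fun _ _ => abs_nonneg _
  refine ⟨C + 4 * B, by positivity, fun t ht => ?_⟩
  have hl : 0.69 ≤ Real.log t := by
    have := Real.log_two_gt_d9
    have := Real.log_le_log (by norm_num) ht
    linarith
  rcases le_or_gt X t with h1 | h1
  · have hl1 : 1 ≤ Real.log t := by
      rw [Real.le_log_iff_exp_le (by linarith)]
      have := Real.exp_one_lt_d9
      linarith
    have hs : 1 ≤ √(Real.log t) := Real.one_le_sqrt.2 hl1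
    refine (h t h1).trans ?_
    have e : Real.log t = √(Real.log t) ^ 2 := (Real.sq_sqrt (by linarith)).symm
    have e2 : √(Real.log t) ^ 3 ≤ Real.log t ^ 2 := by
      calc √(Real.log t) ^ 3 ≤ √(Real.log t) ^ 4 := pow_le_pow_right₀ hs (by norm_num)
        _ = (√(Real.log t) ^ 2) ^ 2 := by ring
        _ = _ := by rw [← e]
    calc C * t * √(Real.log t) ^ 3 ≤ C * t * Real.log t ^ 2 := by gcongr
      _ = C * (t * Real.log t ^ 2) := by ring
      _ ≤ _ := by gcongr; linarith
  · have h2 : |SR t| ≤ B := by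
      refine (Finset.abs_sum_le_sum_abs _ _).trans ?_
      refine Finset.sum_le_sum_of_subset_of_nonneg ?_ fun _ _ _ => abs_nonneg _
      exact Finset.Ioc_subset_Ioc_right (Nat.floor_mono h1.le)
    refine h2.trans ?_
    have : 1 / 4 ≤ t * Real.log t ^ 2 := by nlinarith
    calc B = 4 * B * (1 / 4) := by ring
      _ ≤ (C + 4 * B) * (t * Real.log t ^ 2) := by gcongr; linarith

lemma sum_Icc_aR (t : ℝ) : ∑ k ∈ Finset.Icc 0 ⌊t⌋₊, aR k = SR t := by
  unfold SR
  rw [Finset.Icc_eq_cons_Ioc (Nat.zero_le _), Finset.sum_cons]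
  simp [aR]

lemma sum_f_aR {b : ℝ} (hb : 2 ≤ b) :
    ∑ k ∈ Finset.Icc 0 ⌊b⌋₊, (Real.log k ^ 3)⁻¹ * aR k = Chebyshev.psi b - ⌊b⌋₊ + 1 := by
  have h1 : 1 ≤ ⌊b⌋₊ := Nat.le_floor (by simp; linarith)
  have e : ∀ k ∈ Finset.Ioc 1 ⌊b⌋₊, (Real.log k ^ 3)⁻¹ * aR k = vonMangoldt k - 1 := by
    intro k hk
    have : (1:ℝ) < k := by exact_mod_cast (Finset.mem_Ioc.1 hk).1
    have := Real.log_pos this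
    unfold aR
    field_simp
  rw [Finset.Icc_eq_cons_Ioc (Nat.zero_le _), Finset.sum_cons, Chebyshev.psi,
    ← Finset.sum_Ioc_consecutive _ (Nat.zero_le 1) h1, ← Finset.sum_Ioc_consecutive _ (Nat.zero_le 1) h1,
    Finset.sum_congr rfl e, Finset.sum_sub_distrib]
  simp [aR, Nat.cast_sub h1]
  ring

lemma psi_abs : ∃ C : ℝ, 0 < C ∧ ∀ᶠ x : ℝ in atTop,
    |Chebyshev.psi x - x| ≤ 2 + C * x / √(Real.log x) ^ 3
      + C * ∫ t in (2:ℝ)..x, 1 / Real.log t ^ 2 := by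
  obtain ⟨C, X, hC, hX, h⟩ := SR_bound
  obtain ⟨D, hD, hd⟩ := SR_bound_all
  refine ⟨C + 3 * D, by positivity, ?_⟩
  filter_upwards [eventually_ge_atTop X, eventually_ge_atTop 3] with x hx hx3
  have hlog : ∀ t : ℝ, 2 ≤ t → 0 < Real.log t := fun t ht => Real.log_pos (by linarith)
  have hder : ∀ t : ℝ, 2 ≤ t → HasDerivAt (fun t : ℝ => (Real.log t ^ 3)⁻¹)
      (-(3 / (t * Real.log t ^ 4))) t := by
    intro t ht
    have hp := hlog t ht
    have h0 : t ≠ 0 := by linarith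
    have := (((Real.hasDerivAt_log h0).fun_pow 3).fun_inv (pow_ne_zero 3 hp.ne'))
    refine HasDerivAt.congr_deriv this ?_
    push_cast
    field_simp
  have hcont : ContinuousOn (fun t : ℝ => -(3 / (t * Real.log t ^ 4))) (Set.Icc 2 x) := by
    intro t ht
    have hp := hlog t ht.1
    have h0 : t ≠ 0 := by linarith [ht.1]
    have h1 : t * Real.log t ^ 4 ≠ 0 := by positivity
    apply ContinuousAt.continuousWithinAt
    fun_prop
  have hint : IntegrableOn (deriv fun t : ℝ => (Real.log t ^ 3)⁻¹) (Set.Icc 2 x) := by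
    refine IntegrableOn.congr_fun hcont.integrableOn_Icc (fun t ht => ?_) measurableSet_Icc
    exact (hder t ht.1).deriv.symm
  have key := sum_mul_eq_sub_integral_mul₁ (f := fun t : ℝ => (Real.log t ^ 3)⁻¹) aR
    (by simp [aR]) (by simp [aR]) x
    (fun t ht => (hder t ht.1).differentiableAt) hint
  rw [sum_f_aR (by linarith), sum_Icc_aR] at key
  simp only [sum_Icc_aR] at key
  have hI : |∫ t in Set.Ioc 2 x, deriv (fun t : ℝ => (Real.log t ^ 3)⁻¹) t * SR t| ≤
      3 * D * ∫ t in (2:ℝ)..x, 1 / Real.log t ^ 2 := by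
    rw [← intervalIntegral.integral_of_le (by linarith), ← intervalIntegral.integral_const_mul,
      ← Real.norm_eq_abs]
    refine intervalIntegral.norm_integral_le_of_norm_le (by linarith) ?_ ?_
    · refine Eventually.of_forall fun t ht => ?_
      have hp := hlog t ht.1.le
      have ht0 : 0 < t := by linarith [ht.1]
      rw [(hder t ht.1.le).deriv, norm_mul, norm_neg, Real.norm_of_nonneg (by positivity),
        Real.norm_eq_abs]
      calc 3 / (t * Real.log t ^ 4) * |SR t| ≤
          3 / (t * Real.log t ^ 4) * (D * (t * Real.log t ^ 2)) := by
            gcongr; exact hd t ht.1.le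
        _ = _ := by field_simp
    · exact (Chebyshev.intervalIntegrable_one_div_log_sq (by norm_num) (by linarith)).const_mul _
  have hS := h x hx
  have hL := hlog x (by linarith)
  set r := √(Real.log x) with hr
  have hr2 : Real.log x = r ^ 2 := (Real.sq_sqrt hL.le).symm
  have hr0 : 0 < r := Real.sqrt_pos.2 hL
  have hS2 : |(Real.log x ^ 3)⁻¹ * SR x| ≤ C * x / r ^ 3 := by
    rw [abs_mul, abs_of_nonneg (by positivity), hr2]
    calc ((r ^ 2) ^ 3)⁻¹ * |SR x| ≤ ((r ^ 2) ^ 3)⁻¹ * (C * x * r ^ 3) := by gcongr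
      _ = _ := by field_simp
  have f1 := Nat.floor_le (show 0 ≤ x by linarith)
  have f2 := Nat.lt_floor_add_one x
  have hIn : 0 ≤ ∫ t in (2:ℝ)..x, 1 / Real.log t ^ 2 :=
    intervalIntegral.integral_nonneg (by linarith) fun t _ => by positivity
  have g1 : C * x / r ^ 3 ≤ (C + 3 * D) * x / r ^ 3 := by gcongr; linarith
  have g2 : 3 * D * (∫ t in (2:ℝ)..x, 1 / Real.log t ^ 2) ≤
    (C + 3 * D) * ∫ t in (2:ℝ)..x, 1 / Real.log t ^ 2 := by gcongr; linarith
  rw [abs_le] at hI hS2 ⊢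
  constructor <;> linarith

lemma aux_log_inf : Tendsto (fun x : ℝ => √(Real.log x)) atTop atTop :=
  Real.tendsto_sqrt_atTop.comp Real.tendsto_log_atTop

lemma sqrt_littleo : (fun x : ℝ => √x) =o[atTop] (fun x => x / Real.log x) := by
  have h := (isLittleO_log_rpow_atTop (show (0:ℝ) < 1/2 by norm_num))
  rw [isLittleO_iff] at h ⊢
  intro c hc
  filter_upwards [h hc, eventually_gt_atTop 1] with x hx h1
  have hl := Real.log_pos h1
  rw [← Real.sqrt_eq_rpow] at hx
  rw [Real.norm_of_nonneg (by positivity), Real.norm_of_nonneg (by positivity)] at hx ⊢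
  rw [← mul_div_assoc, le_div_iff₀ hl]
  calc √x * Real.log x ≤ √x * (c * √x) := by gcongr
    _ = c * (√x * √x) := by ring
    _ = _ := by rw [Real.mul_self_sqrt (by linarith)]

lemma theta_est : (fun x => Chebyshev.theta x - x) =o[atTop] (fun x => x / Real.log x) := by
  have h1 : (fun x => Chebyshev.psi x - x) =o[atTop] (fun x => x / Real.log x) := by
    obtain ⟨C, hC, h⟩ := psi_abs
    have : (fun x => 2 + C * x / √(Real.log x) ^ 3
      + C * ∫ t in (2:ℝ)..x, 1 / Real.log t ^ 2) =o[atTop] (fun x => x / Real.log x) := by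
      refine (IsLittleO.add ?_ ?_).add ?_
      · refine IsLittleO.trans ?_ sqrt_littleo
        exact isLittleO_const_left.2 (Or.inr (tendsto_norm_atTop_atTop.comp Real.tendsto_sqrt_atTop))
      · rw [isLittleO_iff]
        intro c hc
        filter_upwards [eventually_gt_atTop 1, aux_log_inf.eventually_ge_atTop (C / c)] with x hx hr
        have hL := Real.log_pos hx
        set r := √(Real.log x) with hr'
        have hr2 : Real.log x = r ^ 2 := (Real.sq_sqrt hL.le).symm
        have hr0 : 0 < r := Real.sqrt_pos.2 hL
        rw [Real.norm_of_nonneg (by positivity), Real.norm_of_nonneg (by positivity), hr2]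
        rw [div_le_iff₀ hc] at hr
        rw [← mul_div_assoc, div_le_div_iff₀ (by positivity) (by positivity)]
        calc C * x * r ^ 2 ≤ (r * c) * x * r ^ 2 := by gcongr
          _ = _ := by ring
      · refine (Chebyshev.integral_one_div_log_sq_isBigO.const_mul_left C).trans_isLittleO ?_
        rw [isLittleO_iff]
        intro c hc
        filter_upwards [eventually_gt_atTop 1,
          Real.tendsto_log_atTop.eventually_ge_atTop (1 / c)] with x hx hr
        have hL := Real.log_pos hx
        rw [Real.norm_of_nonneg (by positivity), Real.norm_of_nonneg (by positivity)]
        rw [div_le_iff₀ hc] at hr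
        rw [← mul_div_assoc, div_le_div_iff₀ (by positivity) (by positivity)]
        calc x * Real.log x = 1 * (x * Real.log x) := by ring
          _ ≤ (Real.log x * c) * (x * Real.log x) := by gcongr
          _ = _ := by ring
    refine IsBigO.trans_isLittleO (IsBigO.of_bound 1 ?_) this
    filter_upwards [h] with x hx
    rw [one_mul, Real.norm_eq_abs]
    exact hx.trans (le_abs_self _)
  have h2 : (fun x => Chebyshev.psi x - Chebyshev.theta x) =o[atTop] (fun x => x / Real.log x) :=
    Chebyshev.isBigO_psi_sub_theta_sqrt.trans_isLittleO sqrt_littleo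
  refine (h1.sub h2).congr_left fun x => by ring

lemma theta_ge_ev {η : ℝ} (hη : 0 < η) :
    ∀ᶠ x : ℝ in atTop, x - η * (x / Real.log x) ≤ Chebyshev.theta x := by
  filter_upwards [theta_est.bound hη, eventually_gt_atTop 1] with x hx h1
  have hL := Real.log_pos h1
  rw [Real.norm_eq_abs, Real.norm_of_nonneg (by positivity), abs_le] at hx
  linarith

lemma pi_upper {η : ℝ} (hη : 0 < η) :
    ∀ᶠ x : ℝ in atTop, (Nat.primeCounting ⌊x⌋₊ : ℝ) ≤ (1 + η) * (x / Real.log x) := by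
  filter_upwards [theta_est.bound (half_pos hη), eventually_ge_atTop 3,
    Chebyshev.integral_theta_div_log_sq_isLittleO.bound (half_pos hη)] with x hx h1 h2
  have hL : 1 ≤ Real.log x := by
    rw [Real.le_log_iff_exp_le (by linarith)]
    have := Real.exp_one_lt_d9
    linarith
  have hp : 0 ≤ x / Real.log x := by positivity
  rw [Real.norm_eq_abs, Real.norm_of_nonneg hp, abs_le] at hx h2
  rw [Chebyshev.primeCounting_eq_theta_div_log_add_integral (by linarith)]
  have : x / Real.log x ≤ x := div_le_self (by linarith) hL
  have : Chebyshev.theta x / Real.log x ≤ (x + η / 2 * x) / Real.log x := by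
    gcongr; nlinarith
  have e : (x + η / 2 * x) / Real.log x = (1 + η / 2) * (x / Real.log x) := by ring
  linarith

lemma pi_lower {η : ℝ} (hη : 0 < η) (h1 : η < 1) :
    ∀ᶠ x : ℝ in atTop, x / Real.log x + (1 - η) * (x / Real.log x ^ 2) ≤
      (Nat.primeCounting ⌊x⌋₊ : ℝ) := by
  obtain ⟨X, hX⟩ := eventually_atTop.1 (theta_ge_ev (show 0 < η / 4 by positivity))
  set Y := max X 3 with hY
  filter_upwards [eventually_ge_atTop Y, eventually_ge_atTop (4 / η * Y),
    theta_ge_ev (show 0 < η / 4 by positivity)] with x hx hx2 hx3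
  have hY3 : 3 ≤ Y := le_max_right _ _
  have hlog : ∀ t : ℝ, Y ≤ t → 1 ≤ Real.log t := fun t ht => by
    rw [Real.le_log_iff_exp_le (by linarith)]
    have := Real.exp_one_lt_d9
    linarith
  have hL := hlog x hx
  rw [Chebyshev.primeCounting_eq_theta_div_log_add_integral (by linarith)]
  have hii : ∀ a b : ℝ, 2 ≤ a → a ≤ b → IntervalIntegrable
      (fun t => Chebyshev.theta t / (t * Real.log t ^ 2)) volume a b := by
    intro a b ha hab
    rw [intervalIntegrable_iff_integrableOn_Ioc_of_le hab]
    refine (Chebyshev.integrableOn_theta_div_id_mul_log_sq b).mono_set ?_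
    intro t ht
    exact ⟨by linarith [ht.1], ht.2⟩
  have hI : (1 - η / 4) * ((x - Y) / Real.log x ^ 2) ≤
      ∫ t in (2:ℝ)..x, Chebyshev.theta t / (t * Real.log t ^ 2) := by
    rw [← intervalIntegral.integral_add_adjacent_intervals (hii 2 Y le_rfl (by linarith))
      (hii Y x (by linarith) hx)]
    have i1 : 0 ≤ ∫ t in (2:ℝ)..Y, Chebyshev.theta t / (t * Real.log t ^ 2) := by
      refine intervalIntegral.integral_nonneg (by linarith) fun t ht => ?_
      have := Chebyshev.theta_nonneg t
      have : 0 ≤ t := by linarith [ht.1]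
      positivity
    have i2 : ∫ t in Y..x, (1 - η / 4) / Real.log x ^ 2 ≤
        ∫ t in Y..x, Chebyshev.theta t / (t * Real.log t ^ 2) := by
      refine intervalIntegral.integral_mono_on hx (by simp) (hii Y x (by linarith) hx) fun t ht => ?_
      have lt := hlog t ht.1
      have t0 : 0 < t := by linarith [ht.1]
      have h5 := hX t ((le_max_left _ _).trans ht.1)
      have h6 : t / Real.log t ≤ t := div_le_self t0.le lt
      have h7 : (1 - η / 4) * t ≤ Chebyshev.theta t := by nlinarith
      have h8 : Real.log t ≤ Real.log x := Real.log_le_log t0 ht.2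
      calc (1 - η / 4) / Real.log x ^ 2 ≤ (1 - η / 4) / Real.log t ^ 2 := by
            have : 0 ≤ 1 - η / 4 := by linarith
            gcongr
        _ = (1 - η / 4) * t / (t * Real.log t ^ 2) := by field_simp
        _ ≤ _ := by gcongr
    rw [intervalIntegral.integral_const, smul_eq_mul] at i2
    have e : (x - Y) * ((1 - η / 4) / Real.log x ^ 2) = (1 - η / 4) * ((x - Y) / Real.log x ^ 2) := by
      ring
    linarith
  have hx0 : 0 < x := by linarith
  have j1 : x / Real.log x - η / 4 * (x / Real.log x ^ 2) ≤ Chebyshev.theta x / Real.log x := by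
    calc _ = (x - η / 4 * (x / Real.log x)) / Real.log x := by field_simp
      _ ≤ _ := by gcongr
  have j2 : (1 - η / 4) * (x / Real.log x ^ 2) ≤ x / Real.log x ^ 2 := by
    have : 0 ≤ x / Real.log x ^ 2 := by positivity
    nlinarith
  have j3 : (1 - η / 4) * (x / Real.log x ^ 2) ≤ (x - Y) / Real.log x ^ 2 := by
    rw [← mul_div_assoc]
    gcongr
    rw [div_mul_eq_mul_div, div_le_iff₀ hη] at hx2
    linarith
  have j4 : 0 ≤ x / Real.log x ^ 2 := by positivity
  have j5 : (1 - η / 4) * ((1 - η / 4) * (x / Real.log x ^ 2)) ≤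
      (1 - η / 4) * ((x - Y) / Real.log x ^ 2) := by
    have : 0 ≤ 1 - η / 4 := by linarith
    gcongr
  nlinarith [mul_nonneg (sq_nonneg (η / 4)) j4, mul_nonneg hη.le j4]

end

section

open Filter Topology

lemma main_ineq {η ε L l Lx M : ℝ} (hη : 0 < η) (hη1 : η ≤ 1) (he : 5 * η ≤ ε) (hL : 0 < L)
    (hM : M = L + l + ε) (hLx : Lx ≤ L + l + η) (hLx0 : 0 < Lx) (hl : l + η ≤ η * L) :
    1 ≤ M / Lx + (1 - η) * (M / Lx ^ 2) - (1 + η) / L := by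
  have h1 : Lx + (ε - η) ≤ M := by linarith
  have h2 : 1 + (ε - η) / Lx ≤ M / Lx := by
    rw [le_div_iff₀ hLx0, add_mul, div_mul_cancel₀ _ hLx0.ne']; linarith
  have h3 : 1 / Lx ≤ M / Lx ^ 2 := by
    rw [div_le_div_iff₀ hLx0 (by positivity)]; nlinarith
  have h4 : (1 - η) * (1 / Lx) ≤ (1 - η) * (M / Lx ^ 2) := by
    have : 0 ≤ 1 - η := by linarith
    gcongr
  have h5 : (1 + η) / L ≤ (ε - η) / Lx + (1 - η) * (1 / Lx) := by
    have e : (ε - η) / Lx + (1 - η) * (1 / Lx) = (ε - η + 1 - η) / Lx := by ring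
    rw [e, div_le_div_iff₀ hL hLx0]
    have : Lx ≤ (1 + η) * L := by linarith
    calc (1 + η) * Lx ≤ (1 + η) * ((1 + η) * L) := by gcongr
      _ ≤ _ := by
        have : (1 + η) * (1 + η) ≤ ε - η + 1 - η := by nlinarith
        nlinarith
  linarith

lemma count_primes {ε : ℝ} (hε : 0 < ε) : ∀ᶠ k : ℕ in atTop,
    Nat.primeCounting k + k ≤
      Nat.primeCounting ⌊(k * (Real.log k + Real.log (Real.log k) + ε) : ℝ)⌋₊ := by
  set η := min (ε / 5) (1 / 2) with hη'
  have hη : 0 < η := by positivity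
  have hη1 : η ≤ 1 / 2 := min_le_right _ _
  have he : 5 * η ≤ ε := by have : η ≤ ε / 5 := min_le_left _ _; linarith
  have tk : Tendsto (fun k : ℕ => (k : ℝ)) atTop atTop := tendsto_natCast_atTop_atTop
  have tL := Real.tendsto_log_atTop.comp tk
  have tl := Real.tendsto_log_atTop.comp tL
  have tM : Tendsto (fun k : ℕ => (k * (Real.log k + Real.log (Real.log k) + ε) : ℝ)) atTop atTop :=
    tk.atTop_mul_atTop₀ (tendsto_atTop_add_const_right _ _ (tL.atTop_add_atTop tl))
  have e1 : ∀ᶠ L : ℝ in atTop, Real.log L ≤ η / 4 * L := by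
    filter_upwards [Real.isLittleO_log_id_atTop.bound (show 0 < η / 4 by positivity),
      eventually_ge_atTop 0] with L h h0
    simp only [id, Real.norm_eq_abs, abs_of_nonneg h0] at h
    exact (le_abs_self _).trans h
  have e2 : ∀ᶠ L : ℝ in atTop, 4 * (ε + η + 1) / η ≤ L := eventually_ge_atTop _
  filter_upwards [tM.eventually (pi_lower hη (by linarith)), tk.eventually (pi_upper hη),
    tL.eventually e1, tL.eventually e2, tL.eventually_ge_atTop 1, tk.eventually_ge_atTop 1]
    with k p1 p2 q1 q2 q3 q4
  simp only [Function.comp] at q1 q2 q3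
  rw [Nat.floor_natCast] at p2
  set L := Real.log k with hL
  set l := Real.log L with hl
  have hl0 : 0 ≤ l := Real.log_nonneg q3
  set M := L + l + ε with hM
  have hM0 : 0 < M := by linarith
  rw [div_le_iff₀ hη] at q2
  have hlx : Real.log (k * M) = L + Real.log M := Real.log_mul (by linarith) hM0.ne'
  have hlM : Real.log M ≤ l + η := by
    have : M = L * (1 + (l + ε) / L) := by rw [hM]; field_simp; ring
    have h0 : 0 < 1 + (l + ε) / L := by positivity
    rw [this, Real.log_mul (by linarith) h0.ne']
    have := Real.log_le_sub_one_of_pos h0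
    have : (l + ε) / L ≤ η := by rw [div_le_iff₀ (by linarith)]; nlinarith
    linarith
  have hlM0 : 0 ≤ Real.log M := Real.log_nonneg (by linarith)
  set Lx := Real.log (k * M) with hLx
  have := main_ineq (Lx := Lx) (M := M) hη (by linarith) he (by linarith) hM (by linarith)
    (by linarith) (by nlinarith)
  have h2 : (k : ℝ) * 1 ≤ k * (M / Lx + (1 - η) * (M / Lx ^ 2) - (1 + η) / L) := by gcongr
  have h3 : (k : ℝ) * (M / Lx + (1 - η) * (M / Lx ^ 2) - (1 + η) / L) =
    k * M / Lx + (1 - η) * (k * M / Lx ^ 2) - (1 + η) * (k / L) := by ring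
  have : ((Nat.primeCounting k + k : ℕ) : ℝ) ≤ Nat.primeCounting ⌊(k * M : ℝ)⌋₊ := by
    push_cast; linarith
  exact_mod_cast this

lemma prime_tuple {k N : ℕ} (hN : Nat.primeCounting k + k ≤ Nat.primeCounting N) :
    ∃ h : Fin k → ℤ, Admissible h ∧ ∀ i, (k : ℤ) < h i ∧ h i ≤ N := by
  set P := (Finset.Ioc k N).filter Nat.Prime with hP
  have hcard : k ≤ P.card := by
    have h1 : ∀ n : ℕ, Nat.primeCounting n = ((Finset.Icc 0 n).filter Nat.Prime).card := by
      intro n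
      rw [Nat.primeCounting, Nat.primeCounting', Nat.count_eq_card_filter_range,
        Nat.range_succ_eq_Icc_zero]
    rw [h1, h1] at hN
    have h2 : (Finset.Icc 0 N).filter Nat.Prime ⊆ (Finset.Icc 0 k).filter Nat.Prime ∪ P := by
      intro p hp
      simp only [hP, Finset.mem_union, Finset.mem_filter, Finset.mem_Icc, Finset.mem_Ioc] at hp ⊢
      rcases le_or_gt p k with h | h
      · exact Or.inl ⟨⟨Nat.zero_le _, h⟩, hp.2⟩
      · exact Or.inr ⟨⟨h, hp.1.2⟩, hp.2⟩
    have h3 := (Finset.card_le_card h2).trans (Finset.card_union_le _ _)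
    omega
  obtain ⟨Q, hQP, hQ⟩ := Finset.exists_subset_card_eq hcard
  have hmem : ∀ i, Q.orderEmbOfFin hQ i ∈ P := fun i => hQP (Finset.orderEmbOfFin_mem Q hQ i)
  have hprop : ∀ i, (k < Q.orderEmbOfFin hQ i ∧ Q.orderEmbOfFin hQ i ≤ N) ∧
      (Q.orderEmbOfFin hQ i).Prime := by
    intro i
    have := hmem i
    simpa [hP] using this
  refine ⟨fun i => (Q.orderEmbOfFin hQ i : ℤ), ⟨?_, ?_⟩, fun i => ?_⟩
  · intro i j hij
    beta_reduce
    exact_mod_cast (Q.orderEmbOfFin hQ).strictMono hij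
  · intro p hp
    have : Fact p.Prime := ⟨hp⟩
    rcases le_or_gt p k with h | h
    · refine ⟨0, fun i => ?_⟩
      intro h0
      have h1 : ((Q.orderEmbOfFin hQ i : ℕ) : ZMod p) = 0 := by exact_mod_cast h0
      rw [ZMod.natCast_eq_zero_iff] at h1
      have h2 := (Nat.prime_dvd_prime_iff_eq hp (hprop i).2).1 h1
      have h3 := (hprop i).1.1
      omega
    · by_contra hc
      push Not at hc
      have hs : Function.Surjective (fun i : Fin k => (((Q.orderEmbOfFin hQ i : ℕ) : ℤ) : ZMod p)) := hc
      have := Fintype.card_le_of_surjective _ hs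
      rw [ZMod.card, Fintype.card_fin] at this
      omega
  · have := (hprop i).1
    beta_reduce
    exact ⟨by exact_mod_cast this.1, by exact_mod_cast this.2⟩

end

/-- **H(k) ≤ k log k + k log log k − k + o(k)**: for every `ε > 0` there is `K` such
that for all `k ≥ K` there is an admissible `k`-tuple of diameter at most
`k log k + k log log k − k + ε k`. -/
theorem Hk_asymptotic_upper_bound :
    ∀ ε : ℝ, 0 < ε → ∃ K : ℕ, ∀ k : ℕ, ∀ hk : K + 1 ≤ k,
      ∃ h : Fin k → ℤ, Admissible h ∧
        ((h ⟨k - 1, by omega⟩ - h ⟨0, by omega⟩ : ℤ) : ℝ) ≤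
          k * Real.log k + k * Real.log (Real.log k) - k + ε * k := by
  intro ε hε
  obtain ⟨K, hK⟩ := Filter.eventually_atTop.1 (count_primes hε)
  refine ⟨K, fun k hk => ?_⟩
  obtain ⟨h, hA, hb⟩ := prime_tuple (hK k (by omega))
  refine ⟨h, hA, ?_⟩
  set x : ℝ := k * (Real.log k + Real.log (Real.log k) + ε) with hx
  have b1 := (hb ⟨k - 1, by omega⟩).2
  have b2 := (hb ⟨0, by omega⟩).1
  have b3 := (hb ⟨0, by omega⟩).2
  have hx0 : 0 ≤ x := by
    by_contra hc
    rw [Nat.floor_of_nonpos (by linarith)] at b3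
    push_cast at b3
    omega
  have hf := Nat.floor_le hx0
  have c1 : ((h ⟨k - 1, by omega⟩ : ℤ) : ℝ) ≤ (⌊x⌋₊ : ℝ) := by exact_mod_cast b1
  have c2 : (k : ℝ) ≤ ((h ⟨0, by omega⟩ : ℤ) : ℝ) := by exact_mod_cast b2.le
  push_cast
  have e : x = k * Real.log k + k * Real.log (Real.log k) + ε * k := by rw [hx]; ring
  linarith
end

section
/- For any smooth compactly supported function F : [0,∞) → ℝ, one has ∑_{r=1}^∞ ∫_{0 < t_1 < … < t_r, t_1+…+t_r = 1} |∂_{(t_1)} ⋯ ∂_{(t_r)} F(0)|² · (dt_1 ⋯ dt_{r−1})/(t_1 ⋯ t_r) = ∫_0^1 |F'(t)|² dt, where for h > 0 the difference operator is ∂_{(h)}F(x) := F(x+h) − F(x), and the integral over the hyperplane {t_1+…+t_r = 1} is with respect to the measure dt_1 ⋯ dt_{r−1} (i.e., substituting t_r = 1 − t_1 − … − t_{r−1}); moreover the sum on the left-hand side converges absolutely. -/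
open MeasureTheory

/-- The forward difference operator `∂_{(h)} F (x) = F(x+h) − F(x)`. -/
def fdiff (h : ℝ) (F : ℝ → ℝ) : ℝ → ℝ := fun x => F (x + h) - F x

/-- Iterated forward differences `∂_{(t₁)} ⋯ ∂_{(t_r)} F`. -/
def fdiffs : (r : ℕ) → (Fin r → ℝ) → (ℝ → ℝ) → (ℝ → ℝ)
  | 0, _, F => F
  | r + 1, t, F => fdiff (t 0) (fdiffs r (fun i => t i.succ) F)

/-- The `r = n+1` term of the series: the integral over
`{0 < t₁ < ⋯ < t_{n+1}, t₁ + ⋯ + t_{n+1} = 1}` (with `t_{n+1} = 1 − t₁ − ⋯ − t_n`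
substituted, and measure `dt₁ ⋯ dt_n`) of
`|∂_{(t₁)} ⋯ ∂_{(t_{n+1})} F(0)|² / (t₁ ⋯ t_{n+1})`. -/
noncomputable def simplexTerm (F : ℝ → ℝ) (n : ℕ) : ℝ :=
  ∫ u in {u : Fin n → ℝ |
      0 < (Fin.snoc u (1 - ∑ j, u j) : Fin (n + 1) → ℝ) 0 ∧
      StrictMono (Fin.snoc u (1 - ∑ j, u j) : Fin (n + 1) → ℝ)},
    (fdiffs (n + 1) (Fin.snoc u (1 - ∑ j, u j)) F 0) ^ 2 *
      (∏ i, (Fin.snoc u (1 - ∑ j, u j) : Fin (n + 1) → ℝ) i)⁻¹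

open Set Filter Topology ENNReal

def dpX {n : ℕ} (T : ℝ) (u : Fin n → ℝ) : Fin (n + 1) → ℝ := Fin.snoc u (T - ∑ j, u j)

def dpP (n : ℕ) : Set (Fin (n + 1) → ℝ) := {x | 0 < x 0 ∧ StrictMono x}

noncomputable def dpW {n : ℕ} (F : ℝ → ℝ) (x : Fin (n + 1) → ℝ) : ℝ≥0∞ :=
  ENNReal.ofReal ((fdiffs (n + 1) x F 0) ^ 2 * (∏ i, x i)⁻¹)

noncomputable def dpQ (n : ℕ) (F : ℝ → ℝ) (T : ℝ) : ℝ≥0∞ :=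
  ∫⁻ u : Fin n → ℝ, (dpP n).indicator (dpW F) (dpX T u)

lemma dp_comm (n : ℕ) (y : Fin n → ℝ) (s : ℝ) (F : ℝ → ℝ) :
    fdiffs n y (fdiff s F) = fdiff s (fdiffs n y F) := by
  induction n with
  | zero => rfl
  | succ n ih =>
    simp only [fdiffs]
    rw [ih]
    funext x
    simp only [fdiff]
    rw [show x + s + y 0 = x + y 0 + s by ring]
    ring

lemma dp_insert (n : ℕ) (i : Fin (n + 1)) (s : ℝ) (y : Fin n → ℝ) (F : ℝ → ℝ) :
    fdiffs (n + 1) (i.insertNth s y) F = fdiffs n y (fdiff s F) := by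
  induction n with
  | zero =>
    have : i = 0 := by omega
    subst this
    simp [fdiffs]
  | succ n ih =>
    induction i using Fin.cases with
    | zero =>
      rw [dp_comm]
      simp [fdiffs]
    | succ i =>
      have h0 : (i.succ.insertNth s y : Fin (n + 2) → ℝ) 0 = y 0 := by
        simp [Fin.insertNth_apply_below]
      have h1 : (fun j : Fin (n+1) => (i.succ.insertNth s y : Fin (n + 2) → ℝ) j.succ) =
          i.insertNth s (fun j => y j.succ) := by
        symm
        rw [Fin.insertNth_eq_iff]
        refine ⟨by simp, ?_⟩
        funext j
        simp [Fin.removeNth, ← Fin.succ_succAbove_succ]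
      change fdiff ((i.succ.insertNth s y : Fin (n + 2) → ℝ) 0) (fdiffs (n+1)
        (fun j : Fin (n+1) => (i.succ.insertNth s y : Fin (n + 2) → ℝ) j.succ) F) = _
      rw [h0, h1, ih]
      rfl

lemma dp_cont (n : ℕ) {F : ℝ → ℝ} (hF : Continuous F) :
    Continuous (fun p : (Fin n → ℝ) × ℝ => fdiffs n p.1 F p.2) := by
  induction n with
  | zero => exact hF.comp continuous_snd
  | succ n ih =>
    simp only [fdiffs, fdiff]
    have e1 : Continuous (fun p : (Fin (n+1) → ℝ) × ℝ => ((fun i : Fin n => p.1 i.succ), p.2 + p.1 0)) := by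
      fun_prop
    have e2 : Continuous (fun p : (Fin (n+1) → ℝ) × ℝ => ((fun i : Fin n => p.1 i.succ), p.2)) := by
      fun_prop
    exact (ih.comp e1).sub (ih.comp e2)

lemma dpX_cont (n : ℕ) : Continuous (fun p : ℝ × (Fin n → ℝ) => dpX p.1 p.2) := by
  unfold dpX
  refine continuous_pi fun i => ?_
  induction i using Fin.lastCases with
  | last => simp only [Fin.snoc_last]; fun_prop
  | cast i => simp only [Fin.snoc_castSucc]; fun_prop

lemma dpP_meas (n : ℕ) : MeasurableSet (dpP n) := by
  have : dpP n = {x | 0 < x 0} ∩ ⋂ i, ⋂ j, ⋂ (_ : i < j), {x | x i < x j} := by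
    ext x
    simp [dpP, StrictMono]
  rw [this]
  refine (measurableSet_lt measurable_const (measurable_pi_apply 0)).inter ?_
  refine MeasurableSet.iInter fun i => MeasurableSet.iInter fun j => MeasurableSet.iInter fun _ => ?_
  exact measurableSet_lt (measurable_pi_apply i) (measurable_pi_apply j)

/-- joint measurability -/
lemma dpW_meas (n : ℕ) {F : ℝ → ℝ} (hF : Continuous F) :
    Measurable (fun p : ℝ × (Fin (n+1) → ℝ) => dpW (fdiff p.1 F) p.2) := by
  unfold dpW
  refine ENNReal.measurable_ofReal.comp ?_
  refine Measurable.mul ?_ ?_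
  · simp only [dp_comm]
    unfold fdiff
    have h := dp_cont (n+1) hF
    have e1 : Continuous (fun p : ℝ × (Fin (n+1) → ℝ) => (p.2, 0 + p.1)) := by fun_prop
    have e2 : Continuous (fun p : ℝ × (Fin (n+1) → ℝ) => (p.2, (0:ℝ))) := by fun_prop
    exact (((h.comp e1).sub (h.comp e2)).pow 2).measurable
  · refine Measurable.inv ?_
    have : Continuous (fun p : ℝ × (Fin (n+1) → ℝ) => ∏ i, p.2 i) := by fun_prop
    exact this.measurable

lemma dpW_meas' (n : ℕ) {F : ℝ → ℝ} (hF : Continuous F) :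
    Measurable (dpW F : (Fin (n+1) → ℝ) → ℝ≥0∞) := by
  unfold dpW
  refine ENNReal.measurable_ofReal.comp ?_
  refine Measurable.mul ?_ ?_
  · have h := dp_cont (n+1) hF
    have e2 : Continuous (fun p : (Fin (n+1) → ℝ) => (p, (0:ℝ))) := by fun_prop
    exact ((h.comp e2).pow 2).measurable
  · refine Measurable.inv ?_
    have : Continuous (fun p : (Fin (n+1) → ℝ) => ∏ i, p i) := by fun_prop
    exact this.measurable

lemma dpI_meas (n : ℕ) {F : ℝ → ℝ} (hF : Continuous F) (T : ℝ) :
    Measurable (fun p : ℝ × (Fin n → ℝ) =>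
      (dpP n).indicator (dpW (fdiff p.1 F)) (dpX (T - p.1) p.2)) := by
  have e : Measurable (fun p : ℝ × (Fin n → ℝ) => dpX (T - p.1) p.2) :=
    ((dpX_cont n).comp (by fun_prop : Continuous
      (fun p : ℝ × (Fin n → ℝ) => (T - p.1, p.2)))).measurable
  have h := (dpW_meas n hF).comp (measurable_fst.prodMk e)
  have := h.indicator (e (dpP_meas n))
  exact this

lemma dpQ_meas (n : ℕ) {F : ℝ → ℝ} (hF : Continuous F) (T : ℝ) :
    Measurable (fun s => dpQ n (fdiff s F) (T - s)) := by
  unfold dpQ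
  exact (dpI_meas n hF T).lintegral_prod_right'

lemma dpA (n : ℕ) (T : ℝ) (G : (Fin (n + 2) → ℝ) → ℝ≥0∞) (hG : Measurable G) (i : Fin (n + 2)) :
    ∫⁻ u : Fin (n+1) → ℝ, G (dpX T u) =
      ∫⁻ v : Fin n → ℝ, ∫⁻ s : ℝ, G (i.insertNth s (dpX (T - s) v)) := by
  have key : ∀ k : Fin (n+1), ∫⁻ u : Fin (n+1) → ℝ, G (dpX T u) =
      ∫⁻ v : Fin n → ℝ, ∫⁻ s : ℝ, G (dpX T (k.insertNth s v)) := by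
    intro k
    have hm : Measurable (fun u : Fin (n+1) → ℝ => G (dpX T u)) :=
      hG.comp ((dpX_cont (n+1)).comp (by fun_prop : Continuous
        (fun u : Fin (n+1) → ℝ => (T, u)))).measurable
    have h := (volume_preserving_piFinSuccAbove (fun _ : Fin (n+1) => ℝ) k).symm
    rw [← h.lintegral_comp hm, Measure.volume_eq_prod, lintegral_prod_symm]
    · rfl
    · exact (hm.comp h.measurable).aemeasurable
  induction i using Fin.lastCases with
  | cast i =>
    rw [key i]
    congr 1; funext v; congr 1; funext s; congr 1
    symm
    rw [Fin.insertNth_eq_iff]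
    constructor
    · simp [dpX]
    · funext j
      induction j using Fin.lastCases with
      | last => simp [dpX, Fin.removeNth, Fin.sum_univ_succAbove _ i]; ring
      | cast j =>
        simp only [dpX, Fin.removeNth]
        rw [Fin.castSucc_succAbove_castSucc]
        simp
  | last =>
    rw [key (Fin.last n)]
    congr 1; funext v
    rw [← lintegral_sub_left_eq_self _ (T - ∑ j, v j)]
    congr 1; funext s; congr 1
    symm
    rw [Fin.insertNth_eq_iff]
    constructor
    · simp [dpX, Fin.sum_univ_castSucc]; ring
    · funext j
      induction j using Fin.lastCases with
      | last => simp [dpX, Fin.removeNth]; ring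
      | cast j =>
        simp [dpX, Fin.removeNth]

lemma dpB_iff (n : ℕ) (i : Fin (n+2)) (s : ℝ) (y : Fin (n+1) → ℝ) :
    i.insertNth s y ∈ dpP (n+1) ↔ (0 < s ∧ y ∈ dpP n) ∧
      ∀ j : Fin (n+1), (j.castSucc < i → y j < s) ∧ (i ≤ j.castSucc → s < y j) := by
  constructor
  · rintro ⟨h0, hm⟩
    have hpos : ∀ k, 0 < (i.insertNth s y : Fin (n+2) → ℝ) k := fun k =>
      h0.trans_le (hm.monotone (Fin.zero_le k))
    refine ⟨⟨by simpa using hpos i, by simpa using hpos (i.succAbove 0), ?_⟩, ?_⟩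
    · have := hm.comp (Fin.strictMono_succAbove i)
      intro a b hab
      simpa using this hab
    · intro j
      constructor
      · intro h
        have := hm ((Fin.succAbove_lt_iff_castSucc_lt i j).2 h)
        simpa using this
      · intro h
        have := hm ((Fin.lt_succAbove_iff_le_castSucc i j).2 h)
        simpa using this
  · rintro ⟨⟨hs, hy0, hy⟩, h⟩
    constructor
    · have : ∀ k, 0 < (i.insertNth s y : Fin (n+2) → ℝ) k := by
        intro k
        rcases Fin.eq_self_or_eq_succAbove i k with rfl | ⟨j, rfl⟩
        · simpa
        · simpa using hy0.trans_le (hy.monotone (Fin.zero_le j))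
      exact this 0
    · intro a b hab
      rcases Fin.eq_self_or_eq_succAbove i a with rfl | ⟨a, rfl⟩
      · rcases Fin.eq_self_or_eq_succAbove a b with rfl | ⟨b, rfl⟩
        · simp at hab
        · simpa using (h b).2 ((Fin.lt_succAbove_iff_le_castSucc _ _).1 hab)
      · rcases Fin.eq_self_or_eq_succAbove i b with rfl | ⟨b, rfl⟩
        · simpa using (h a).1 ((Fin.succAbove_lt_iff_castSucc_lt _ _).1 hab)
        · simpa using hy ((Fin.strictMono_succAbove i).lt_iff_lt.1 hab)

open Classical in
lemma dpB (n : ℕ) (s : ℝ) (y : Fin (n+1) → ℝ) (hne : ∀ j, y j ≠ s) (c : ℝ≥0∞) :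
    ∑ i : Fin (n+2), (if i.insertNth s y ∈ dpP (n+1) then c else 0) =
      if 0 < s ∧ y ∈ dpP n then c else 0 := by
  simp only [dpB_iff]
  split_ifs with hy
  swap
  · simp [hy]
  let S : Set (Fin (n+2)) := {i | ∀ j : Fin (n+1), i ≤ j.castSucc → s < y j}
  have hS : S.Nonempty := ⟨Fin.last _, fun j hj => absurd hj (by simp)⟩
  let i0 := wellFounded_lt.min S hS
  have hi0 : i0 ∈ S := wellFounded_lt.min_mem S hS
  have h0 : ∀ j : Fin (n+1), (j.castSucc < i0 → y j < s) ∧ (i0 ≤ j.castSucc → s < y j) := by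
    intro j
    refine ⟨fun hj => ?_, hi0 j⟩
    have hn : j.castSucc ∉ S := fun h => wellFounded_lt.not_lt_min S h hj
    simp only [S, mem_ofPred_eq, not_forall, not_lt] at hn
    obtain ⟨k, hk, hk'⟩ := hn
    have : j ≤ k := by simpa using hk
    exact lt_of_le_of_ne ((hy.2.2.monotone this).trans hk') (hne j)
  rw [Finset.sum_eq_single i0]
  · rw [if_pos ⟨hy, h0⟩]
  · intro i _ hi
    rw [if_neg]
    rintro ⟨-, h⟩
    rcases lt_or_gt_of_ne hi with hlt | hlt
    · have hl : i ≠ Fin.last _ := (hlt.trans_le (Fin.le_last _)).ne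
      have a := (h (i.castPred hl)).2 (by simp)
      have b := (h0 (i.castPred hl)).1 (by simpa using hlt)
      linarith
    · have hl : i0 ≠ Fin.last _ := (hlt.trans_le (Fin.le_last _)).ne
      have a := (h0 (i0.castPred hl)).2 (by simp)
      have b := (h (i0.castPred hl)).1 (by simpa using hlt)
      linarith
  · simp

lemma dpP_pos {n : ℕ} {x : Fin (n+1) → ℝ} (h : x ∈ dpP n) (i : Fin (n+1)) : 0 < x i :=
  h.1.trans_le (h.2.monotone (Fin.zero_le i))

lemma dpX_sum {n : ℕ} (T : ℝ) (u : Fin n → ℝ) : ∑ i, dpX T u i = T := by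
  simp [dpX, Fin.sum_univ_castSucc]

lemma dp_ne (n : ℕ) (T : ℝ) (v : Fin n → ℝ) : ∀ᵐ s : ℝ, ∀ j, dpX (T - s) v j ≠ s := by
  rw [ae_all_iff]
  intro j
  induction j using Fin.lastCases with
  | cast j =>
    filter_upwards [(measure_singleton (v j) : volume {v j} = 0) |> compl_mem_ae_iff.2] with s hs
    simp only [dpX, Fin.snoc_castSucc]
    exact fun h => hs h.symm
  | last =>
    filter_upwards [(measure_singleton ((T - ∑ j, v j)/2) : volume {(T - ∑ j, v j)/2} = 0)
      |> compl_mem_ae_iff.2] with s hs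
    simp only [dpX, Fin.snoc_last]
    intro h
    apply hs
    rw [mem_singleton_iff]
    linarith

open Classical in
lemma dp_rec (n : ℕ) {F : ℝ → ℝ} (hF : Continuous F) (T : ℝ) :
    ENNReal.ofReal T * dpQ (n+1) F T = ∫⁻ s in Ioi (0:ℝ), dpQ n (fdiff s F) (T - s) := by
  have hW := dpW_meas' (n+1) hF
  have hXm : Measurable (fun u : Fin (n+1) → ℝ => dpX T u) :=
    ((dpX_cont (n+1)).comp (by fun_prop : Continuous (fun u : Fin (n+1) → ℝ => (T, u)))).measurable
  have hGm : ∀ i : Fin (n+2), Measurable ((dpP (n+1)).indicator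
      (fun x => ENNReal.ofReal (x i) * dpW F x)) := fun i =>
    ((ENNReal.measurable_ofReal.comp (measurable_pi_apply i)).mul hW).indicator (dpP_meas _)
  have h1 : ENNReal.ofReal T * dpQ (n+1) F T = ∑ i : Fin (n+2), ∫⁻ u : Fin (n+1) → ℝ,
      (dpP (n+1)).indicator (fun x => ENNReal.ofReal (x i) * dpW F x) (dpX T u) := by
    have hmm : ∀ i ∈ (Finset.univ : Finset (Fin (n+2))), Measurable (fun u : Fin (n+1) → ℝ =>
      (dpP (n+1)).indicator (fun x => ENNReal.ofReal (x i) * dpW F x) (dpX T u)) :=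
      fun i _ => (hGm i).comp hXm
    have hWm : Measurable (fun u : Fin (n+1) → ℝ => (dpP (n+1)).indicator (dpW F) (dpX T u)) :=
      (hW.indicator (dpP_meas _)).comp hXm
    rw [← lintegral_finsetSum _ hmm, dpQ,
      ← lintegral_const_mul _ (hWm)]
    congr 1; funext u
    by_cases hu : dpX T u ∈ dpP (n+1)
    · simp only [indicator_of_mem hu]
      rw [← Finset.sum_mul, ← ENNReal.ofReal_sum_of_nonneg (fun i _ => (dpP_pos hu i).le),
        dpX_sum]
    · simp [indicator_of_notMem hu]
  have hins : ∀ i : Fin (n+2), Measurable (fun p : ℝ × (Fin n → ℝ) =>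
      (i.insertNth p.1 (dpX (T - p.1) p.2) : Fin (n+2) → ℝ)) := by
    intro i
    have hX : Continuous (fun p : ℝ × (Fin n → ℝ) => dpX (T - p.1) p.2) :=
      (dpX_cont n).comp (by fun_prop : Continuous (fun p : ℝ × (Fin n → ℝ) => (T - p.1, p.2)))
    refine measurable_pi_lambda _ fun k => ?_
    rcases Fin.eq_self_or_eq_succAbove i k with rfl | ⟨j, rfl⟩
    · simpa using measurable_fst
    · simp only [Fin.insertNth_apply_succAbove]
      exact (measurable_pi_apply j).comp hX.measurable
  rw [h1]
  simp only [fun i => dpA n T _ (hGm i) i]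
  have hm : ∀ i : Fin (n+2), Measurable (fun p : (Fin n → ℝ) × ℝ =>
      (dpP (n+1)).indicator (fun x => ENNReal.ofReal (x i) * dpW F x)
        (i.insertNth p.2 (dpX (T - p.2) p.1))) := fun i =>
    ((hGm i).comp (hins i)).comp measurable_swap
  rw [← lintegral_finsetSum _ (fun i _ => (hm i).lintegral_prod_right')]
  have h2 : ∀ v : Fin n → ℝ, ∑ i : Fin (n+2), ∫⁻ s : ℝ,
      (dpP (n+1)).indicator (fun x => ENNReal.ofReal (x i) * dpW F x)
        (i.insertNth s (dpX (T - s) v)) = ∫⁻ s in Ioi (0:ℝ),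
          (dpP n).indicator (dpW (fdiff s F)) (dpX (T - s) v) := by
    intro v
    have hmm : ∀ i ∈ (Finset.univ : Finset (Fin (n+2))), Measurable (fun s : ℝ =>
      (dpP (n+1)).indicator (fun x => ENNReal.ofReal (x i) * dpW F x)
        (i.insertNth s (dpX (T - s) v))) :=
      fun i _ => (hm i).comp measurable_prodMk_left
    rw [← lintegral_finsetSum _ hmm,
      ← lintegral_indicator measurableSet_Ioi]
    refine lintegral_congr_ae ?_
    filter_upwards [dp_ne n T v] with s hs
    have h3 : ∀ i : Fin (n+2), (dpP (n+1)).indicator (fun x => ENNReal.ofReal (x i) * dpW F x)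
        (i.insertNth s (dpX (T - s) v)) = if i.insertNth s (dpX (T - s) v) ∈ dpP (n+1) then
          dpW (fdiff s F) (dpX (T - s) v) else 0 := by
      intro i
      rw [indicator_apply]
      split_ifs with hi
      · have hs0 := ((dpB_iff _ _ _ _).1 hi).1.1
        rw [dpW, dpW, dp_insert, ← ENNReal.ofReal_mul (by simpa using hs0.le)]
        congr 1
        rw [Fin.prod_univ_succAbove _ i]
        simp only [Fin.insertNth_apply_same, Fin.insertNth_apply_succAbove]
        rw [mul_inv]
        field_simp
      · rfl
    simp only [h3]
    rw [dpB n s _ hs]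
    simp only [indicator_apply, mem_Ioi]
    by_cases h : 0 < s <;> simp [h]
  simp only [h2, dpQ]
  rw [lintegral_lintegral_swap]
  exact ((dpI_meas n hF T).comp measurable_swap).aemeasurable

lemma dpQ_nonpos (n : ℕ) (F : ℝ → ℝ) {T : ℝ} (hT : T ≤ 0) : dpQ n F T = 0 := by
  unfold dpQ
  convert lintegral_zero with u
  rw [indicator_of_notMem]
  intro h
  have := dpX_sum T u
  have h2 : 0 < ∑ i, dpX T u i :=
    Finset.sum_pos (fun i _ => dpP_pos h i) Finset.univ_nonempty
  linarith

lemma dp_rec' (n : ℕ) {F : ℝ → ℝ} (hF : Continuous F) (T : ℝ) :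
    ENNReal.ofReal T * dpQ (n+1) F T = ∫⁻ s in Ioo 0 T, dpQ n (fdiff s F) (T - s) := by
  rw [dp_rec n hF, ← lintegral_indicator measurableSet_Ioi, ← lintegral_indicator measurableSet_Ioo]
  congr 1; funext s
  simp only [indicator_apply, mem_Ioi, mem_Ioo]
  by_cases h : 0 < s
  · by_cases h' : s < T
    · simp [h, h']
    · simp [h, h', dpQ_nonpos n (fdiff s F) (T := T - s) (by linarith)]
  · simp [h]

lemma dpQ_zero (F : ℝ → ℝ) {T : ℝ} (hT : 0 < T) :
    ENNReal.ofReal T * dpQ 0 F T = ENNReal.ofReal ((F T - F 0)^2) := by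
  have : dpQ 0 F T = ENNReal.ofReal ((F T - F 0)^2 * T⁻¹) := by
    have hx : ∀ u : Fin 0 → ℝ, dpX T u = fun _ => T := by
      intro u
      funext i
      have : i = Fin.last 0 := by omega
      subst this
      simp only [dpX, Fin.snoc_last]
      simp
    have hP : (fun _ => T : Fin 1 → ℝ) ∈ dpP 0 := ⟨hT, fun a b h => by omega⟩
    unfold dpQ
    rw [lintegral_unique, hx, indicator_of_mem hP, volume_pi, Measure.pi_of_empty]
    simp [dpW, fdiffs, fdiff]
  rw [this, ← ENNReal.ofReal_mul hT.le]
  congr 1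
  field_simp

/-- energy -/
noncomputable def dpE (F : ℝ → ℝ) (T : ℝ) : ℝ≥0∞ :=
  ∫⁻ x in Ioo 0 T, ENNReal.ofReal ((deriv F x)^2)

noncomputable def dpR : ℕ → (ℝ → ℝ) → ℝ → ℝ≥0∞
  | 0, F, T => dpE F T
  | n + 1, F, T => (ENNReal.ofReal T)⁻¹ * ∫⁻ s in Ioo 0 T, dpR n (fdiff s F) (T - s)

lemma dp_fdiff_smooth {F : ℝ → ℝ} (hF : ContDiff ℝ (⊤ : ℕ∞) F) (s : ℝ) :
    ContDiff ℝ (⊤ : ℕ∞) (fdiff s F) := by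
  unfold fdiff
  fun_prop

lemma dp_deriv {F : ℝ → ℝ} (hF : Differentiable ℝ F) (s : ℝ) :
    deriv (fdiff s F) = fdiff s (deriv F) := by
  funext x
  unfold fdiff
  rw [deriv_fun_sub (by fun_prop) (by fun_prop), deriv_comp_add_const]

lemma dp_bound {F : ℝ → ℝ} (hF : Differentiable ℝ F) {C : ℝ} (h : ∀ x, |deriv F x| ≤ C)
    {s : ℝ} (hs : 0 < s) (x : ℝ) : |fdiff s F x| ≤ C * s := by
  have := Convex.norm_image_sub_le_of_norm_deriv_le (f := F) (s := univ) (C := C) (x := x)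
    (y := x + s) (fun x _ => hF x) (fun x _ => h x) convex_univ (mem_univ _) (mem_univ _)
  simpa [fdiff, abs_of_pos hs] using this

lemma dpE_bound {F : ℝ → ℝ} {C : ℝ} (hC : 0 ≤ C) (h : ∀ x, |deriv F x| ≤ C) {T : ℝ} :
    dpE F T ≤ ENNReal.ofReal (C^2 * T) := by
  unfold dpE
  calc _ ≤ ∫⁻ x in Ioo 0 T, ENNReal.ofReal (C^2) := by
        refine lintegral_mono fun x => ENNReal.ofReal_le_ofReal ?_
        exact sq_le_sq.2 (by rw [abs_of_nonneg hC]; exact h x)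
    _ = _ := by
      rw [setLIntegral_const, Real.volume_Ioo, ENNReal.ofReal_mul (by positivity)]
      simp

lemma dpR_step {n : ℕ} {F : ℝ → ℝ} {T : ℝ} (hT : 0 < T) {f : ℝ → ℝ} (hf : Continuous f)
    (h : ∀ s ∈ Ioo 0 T, dpR n (fdiff s F) (T - s) ≤ ENNReal.ofReal (f s))
    (hf0 : ∀ s ∈ Ioo 0 T, 0 ≤ f s) {K : ℝ} (hK : ∫ s in (0:ℝ)..T, f s ≤ K * T) :
    dpR (n+1) F T ≤ ENNReal.ofReal K := by
  rw [dpR]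
  have h1 : ∫⁻ s in Ioo 0 T, dpR n (fdiff s F) (T - s) ≤ ENNReal.ofReal (K * T) := by
    calc _ ≤ ∫⁻ s in Ioo 0 T, ENNReal.ofReal (f s) := setLIntegral_mono' measurableSet_Ioo h
      _ = ENNReal.ofReal (∫ s in Ioo 0 T, f s) := by
        rw [ofReal_integral_eq_lintegral_ofReal]
        · exact (hf.integrableOn_Icc (a := 0) (b := T)).mono_set Ioo_subset_Icc_self
        · exact (ae_restrict_iff' measurableSet_Ioo).2 (Eventually.of_forall hf0)
      _ ≤ _ := by
        apply ENNReal.ofReal_le_ofReal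
        rwa [← integral_Ioc_eq_integral_Ioo, ← intervalIntegral.integral_of_le hT.le]
  have hT' : ENNReal.ofReal T ≠ 0 := by simpa using hT
  calc _ ≤ (ENNReal.ofReal T)⁻¹ * ENNReal.ofReal (K * T) := by gcongr
    _ = _ := by
      rw [ENNReal.ofReal_mul' hT.le, mul_comm, mul_assoc, ENNReal.mul_inv_cancel hT' (by simp), mul_one]

lemma dpR1 {F : ℝ → ℝ} (hF : ContDiff ℝ (⊤ : ℕ∞) F) {C : ℝ} (hC : 0 ≤ C)
    (h : ∀ x, |deriv (deriv F) x| ≤ C) {T : ℝ} (hT : 0 < T) :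
    dpR 1 F T ≤ ENNReal.ofReal (C^2 * T^3) := by
  have hd : Differentiable ℝ F := hF.differentiable (by simp)
  have hd' : ContDiff ℝ (⊤ : ℕ∞) (deriv F) := (contDiff_infty_iff_deriv.1 hF).2
  refine dpR_step hT (f := fun s => C^2 * T^3) (by fun_prop) ?_ ?_ ?_
  · intro s hs
    refine (dpE_bound (C := C * s) (mul_nonneg hC hs.1.le) ?_).trans ?_
    · intro x
      rw [dp_deriv hd]
      exact dp_bound (hd'.differentiable (by simp)) h hs.1 x
    · apply ENNReal.ofReal_le_ofReal
      rw [mul_pow, mul_assoc]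
      gcongr
      have := hs.1; have := hs.2
      have h1 : s^2 ≤ T^2 := by gcongr
      calc s^2 * (T - s) ≤ T^2 * T := by gcongr <;> linarith
        _ = _ := by ring
  · intros; positivity
  · simp; exact le_of_eq (by ring)

lemma dpR2 {F : ℝ → ℝ} (hF : ContDiff ℝ (⊤ : ℕ∞) F) {C : ℝ} (hC : 0 ≤ C)
    (h : ∀ x, |deriv (deriv (deriv F)) x| ≤ C) {T : ℝ} (hT : 0 < T) :
    dpR 2 F T ≤ ENNReal.ofReal (C^2 * T^5) := by
  have hd : Differentiable ℝ F := hF.differentiable (by simp)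
  have hd' : ContDiff ℝ (⊤ : ℕ∞) (deriv F) := (contDiff_infty_iff_deriv.1 hF).2
  have hd'' : ContDiff ℝ (⊤ : ℕ∞) (deriv (deriv F)) := (contDiff_infty_iff_deriv.1 hd').2
  refine dpR_step hT (f := fun s => C^2 * T^5) (by fun_prop) ?_ ?_ ?_
  · intro s hs
    refine (dpR1 (dp_fdiff_smooth hF s) (C := C * s) (mul_nonneg hC hs.1.le) ?_
      (by linarith [hs.2])).trans ?_
    · intro x
      rw [dp_deriv hd, dp_deriv (hd'.differentiable (by simp))]
      exact dp_bound (hd''.differentiable (by simp)) h hs.1 x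
    · apply ENNReal.ofReal_le_ofReal
      rw [mul_pow, mul_assoc]
      gcongr
      have := hs.1; have := hs.2
      have h1 : s^2 ≤ T^2 := by gcongr
      have h2 : (T - s)^3 ≤ T^3 := by gcongr <;> linarith
      calc s^2 * (T - s)^3 ≤ T^2 * T^3 := by
            have : 0 ≤ (T-s)^3 := pow_nonneg (by linarith) 3
            gcongr
        _ = _ := by ring
  · intros; positivity
  · simp; exact le_of_eq (by ring)

lemma dpRn (n : ℕ) {F : ℝ → ℝ} (hF : ContDiff ℝ (⊤ : ℕ∞) F) {C : ℝ} (hC : 0 ≤ C)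
    (h : ∀ x, |deriv (deriv (deriv F)) x| ≤ C) {T : ℝ} (hT : 0 < T) :
    dpR (n + 2) F T ≤ ENNReal.ofReal ((2/3)^n * (C^2 * T^5)) := by
  induction n generalizing F C T with
  | zero => simpa using dpR2 hF hC h hT
  | succ n ih =>
    have hd : Differentiable ℝ F := hF.differentiable (by simp)
    have hd' : ContDiff ℝ (⊤ : ℕ∞) (deriv F) := (contDiff_infty_iff_deriv.1 hF).2
    have hd'' : ContDiff ℝ (⊤ : ℕ∞) (deriv (deriv F)) := (contDiff_infty_iff_deriv.1 hd').2
    refine dpR_step hT (f := fun s => (2/3)^n * (C^2 * 4 * (T - s)^5)) (by fun_prop) ?_ ?_ ?_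
    · intro s hs
      refine (ih (dp_fdiff_smooth hF s) (C := 2 * C) (by positivity) ?_
        (by linarith [hs.2])).trans ?_
      · intro x
        rw [dp_deriv hd, dp_deriv (hd'.differentiable (by simp)),
          dp_deriv (hd''.differentiable (by simp))]
        unfold fdiff
        have := h x; have := h (x + s)
        rw [abs_le] at *
        constructor <;> linarith
      · apply ENNReal.ofReal_le_ofReal
        exact le_of_eq (by ring)
    · intro s hs
      have : 0 ≤ (T-s)^5 := pow_nonneg (by linarith [hs.2]) 5
      positivity
    · have : ∫ s in (0:ℝ)..T, (T - s)^5 = T^6/6 := by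
        rw [intervalIntegral.integral_comp_sub_left (fun x => x^5)]
        simp
        norm_num
      simp only [intervalIntegral.integral_const_mul, this]
      exact le_of_eq (by ring)

lemma dp_lint {g : ℝ → ℝ} (hg : Continuous g) (h0 : ∀ x, 0 ≤ g x) {T : ℝ} (hT : 0 ≤ T) :
    ∫⁻ x in Ioo 0 T, ENNReal.ofReal (g x) = ENNReal.ofReal (∫ x in (0:ℝ)..T, g x) := by
  rw [intervalIntegral.integral_of_le hT, integral_Ioc_eq_integral_Ioo,
    ofReal_integral_eq_lintegral_ofReal]
  · exact (hg.integrableOn_Icc (a := 0) (b := T)).mono_set Ioo_subset_Icc_self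
  · exact Eventually.of_forall h0

open Classical in
lemma dp_double {f : ℝ → ℝ} (hf : Continuous f) (T : ℝ) :
    2 * ∫⁻ s in Ioo 0 T, ∫⁻ x in Ioo 0 (T - s), ENNReal.ofReal ((f (x + s) - f x)^2) =
      ∫⁻ x in Ioo 0 T, ∫⁻ y in Ioo 0 T, ENNReal.ofReal ((f y - f x)^2) := by
  let φ : ℝ × ℝ → ℝ≥0∞ := fun p =>
    if 0 < p.1 ∧ p.1 < p.2 ∧ p.2 < T then ENNReal.ofReal ((f p.2 - f p.1)^2) else 0
  have hφ : Measurable φ := by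
    refine Measurable.ite ?_ ?_ measurable_const
    · exact (measurableSet_lt measurable_const measurable_fst).inter
        ((measurableSet_lt measurable_fst measurable_snd).inter
          (measurableSet_lt measurable_snd measurable_const))
    · exact (ENNReal.continuous_ofReal.comp (by fun_prop)).measurable
  have h1 : ∫⁻ s in Ioo 0 T, ∫⁻ x in Ioo 0 (T - s), ENNReal.ofReal ((f (x + s) - f x)^2) =
      ∫⁻ x, ∫⁻ y, φ (x, y) := by
    have e : ∫⁻ s in Ioo 0 T, ∫⁻ x in Ioo 0 (T - s), ENNReal.ofReal ((f (x + s) - f x)^2) =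
        ∫⁻ s, ∫⁻ x, φ (x, x + s) := by
      rw [← lintegral_indicator measurableSet_Ioo]
      congr 1; funext s
      rw [indicator_apply]
      split_ifs with hs
      · rw [← lintegral_indicator measurableSet_Ioo]
        congr 1; funext x
        rw [indicator_apply]
        simp only [φ]
        congr 1
        simp only [mem_Ioo, eq_iff_iff] at hs ⊢
        constructor
        · rintro ⟨a, b⟩; exact ⟨a, by linarith, by linarith⟩
        · rintro ⟨a, b, c⟩; exact ⟨a, by linarith⟩
      · symm
        convert lintegral_zero with x
        simp only [φ]
        rw [if_neg]
        rintro ⟨a, b, c⟩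
        exact hs ⟨by linarith, by linarith⟩
    rw [e, lintegral_lintegral_swap]
    · congr 1; funext x
      exact lintegral_add_left_eq_self (fun y => φ (x, y)) x
    · exact (hφ.comp (by fun_prop : Measurable (fun p : ℝ × ℝ => (p.2, p.2 + p.1)))).aemeasurable
  have h2 : ∫⁻ x, ∫⁻ y, φ (x, y) = ∫⁻ x, ∫⁻ y, φ (y, x) :=
    lintegral_lintegral_swap (f := fun x y => φ (x, y)) hφ.aemeasurable
  have m1 : Measurable (fun x : ℝ => ∫⁻ y, φ (x, y)) := hφ.lintegral_prod_right'
  rw [h1, two_mul]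
  nth_rw 2 [h2]
  rw [← lintegral_add_left m1, ← lintegral_indicator measurableSet_Ioo]
  congr 1; funext x
  have m2 : Measurable (fun y => φ (x, y)) := hφ.comp measurable_prodMk_left
  rw [← lintegral_add_left m2,
    indicator_apply]
  split_ifs with hx
  · rw [← lintegral_indicator measurableSet_Ioo]
    congr 1; funext y
    rw [indicator_apply]
    simp only [φ, mem_Ioo] at hx ⊢
    rcases lt_trichotomy x y with h | h | h
    · have : ¬ y < x := by linarith
      have : 0 < y := by linarith
      simp [*, h.not_gt]
    · subst h; simp
    · have : ¬ x < y := by linarith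
      have : y < T := by linarith
      simp only [*, true_and, false_and, and_false, and_true, if_false, zero_add]
      rw [show (f x - f y)^2 = (f y - f x)^2 by ring]
  · convert lintegral_zero with y
    simp only [φ]
    rw [if_neg, if_neg, add_zero]
    · rintro ⟨a, b, c⟩; exact hx ⟨by linarith, by linarith⟩
    · rintro ⟨a, b, c⟩; exact hx ⟨by linarith, by linarith⟩

lemma dpE_id {F : ℝ → ℝ} (hF : ContDiff ℝ (⊤ : ℕ∞) F) {T : ℝ} (hT : 0 < T) :
    ENNReal.ofReal T * dpE F T = ENNReal.ofReal ((F T - F 0)^2) +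
      ∫⁻ s in Ioo 0 T, dpE (fdiff s F) (T - s) := by
  have hd : Differentiable ℝ F := hF.differentiable (by simp)
  have hf : Continuous (deriv F) := hF.continuous_deriv (by simp)
  set f := deriv F with hfdef
  set S1 := ∫ x in (0:ℝ)..T, f x with hS1
  set S2 := ∫ x in (0:ℝ)..T, (f x)^2 with hS2
  have e1 : F T - F 0 = S1 := by
    rw [hS1, intervalIntegral.integral_deriv_eq_sub (fun x _ => hd x) (hf.intervalIntegrable _ _)]
  have e2 : dpE F T = ENNReal.ofReal S2 :=
    dp_lint (hf.pow 2) (fun x => sq_nonneg _) hT.le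
  have inner : ∀ x, ∫ y in (0:ℝ)..T, (f y - f x)^2 = S2 - 2 * f x * S1 + T * (f x)^2 := by
    intro x
    have : ∀ y, (f y - f x)^2 = (f y)^2 - 2 * f x * f y + (f x)^2 := fun y => by ring
    simp only [this]
    rw [intervalIntegral.integral_add, intervalIntegral.integral_sub,
      intervalIntegral.integral_const_mul, intervalIntegral.integral_const]
    · simp [hS1, hS2]
    all_goals exact Continuous.intervalIntegrable (by fun_prop) _ _
  have outer : ∫ x in (0:ℝ)..T, (S2 - 2 * f x * S1 + T * (f x)^2) = 2 * (T * S2 - S1^2) := by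
    have : ∀ x, S2 - 2 * f x * S1 + T * (f x)^2 = S2 - (2 * S1) * f x + T * (f x)^2 :=
      fun x => by ring
    simp only [this]
    rw [intervalIntegral.integral_add, intervalIntegral.integral_sub,
      intervalIntegral.integral_const_mul, intervalIntegral.integral_const_mul,
      intervalIntegral.integral_const]
    · simp only [sub_zero, smul_eq_mul, ← hS1, ← hS2]; ring
    all_goals exact Continuous.intervalIntegrable (by fun_prop) _ _
  have in0 : ∀ x, 0 ≤ S2 - 2 * f x * S1 + T * (f x)^2 := fun x => by
    rw [← inner]
    exact intervalIntegral.integral_nonneg hT.le (fun y _ => sq_nonneg _)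
  have out0 : 0 ≤ 2 * (T * S2 - S1^2) := by
    rw [← outer]
    exact intervalIntegral.integral_nonneg hT.le (fun y _ => in0 y)
  have e3 : ∫⁻ s in Ioo 0 T, dpE (fdiff s F) (T - s) = ENNReal.ofReal (T * S2 - S1^2) := by
    have h := dp_double hf T
    have h' : ∫⁻ x in Ioo 0 T, ∫⁻ y in Ioo 0 T, ENNReal.ofReal ((f y - f x)^2) =
        2 * ENNReal.ofReal (T * S2 - S1^2) := by
      have : ∀ x, ∫⁻ y in Ioo 0 T, ENNReal.ofReal ((f y - f x)^2) =
          ENNReal.ofReal (S2 - 2 * f x * S1 + T * (f x)^2) := fun x => by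
        rw [← inner]
        exact dp_lint (by fun_prop) (fun x => sq_nonneg _) hT.le
      simp only [this]
      rw [dp_lint (by fun_prop) in0 hT.le, outer, ENNReal.ofReal_mul (by norm_num)]
      simp
    rw [h'] at h
    have h2 := (ENNReal.mul_right_inj (a := 2) (by norm_num) (by norm_num)).1 h
    rw [← h2]
    congr 1; funext s
    unfold dpE
    rw [dp_deriv hd]
    rfl
  rw [e1, e2, e3, ← ENNReal.ofReal_mul hT.le, ← ENNReal.ofReal_add (by positivity) (by linarith)]
  congr 1; ring

lemma dp_main (n : ℕ) {F : ℝ → ℝ} (hF : ContDiff ℝ (⊤ : ℕ∞) F) {T : ℝ} (hT : 0 < T) :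
    dpE F T = ∑ k ∈ Finset.range n, dpQ k F T + dpR n F T := by
  induction n generalizing F T with
  | zero => simp [dpR]
  | succ n ih =>
    have hT0 : ENNReal.ofReal T ≠ 0 := by simpa using hT
    have hT1 : ENNReal.ofReal T ≠ ∞ := by simp
    refine (ENNReal.mul_right_inj hT0 hT1).1 ?_
    rw [dpE_id hF hT, Finset.sum_range_succ', mul_add, mul_add, dpQ_zero F hT, dpR,
      ← mul_assoc, ENNReal.mul_inv_cancel hT0 hT1, one_mul, Finset.mul_sum]
    simp only [fun k => dp_rec' k hF.continuous T]
    rw [← lintegral_finsetSum _ (fun k _ => dpQ_meas k hF.continuous T)]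
    have : ∫⁻ s in Ioo 0 T, dpE (fdiff s F) (T - s) = ∫⁻ s in Ioo 0 T,
        (∑ k ∈ Finset.range n, dpQ k (fdiff s F) (T - s) + dpR n (fdiff s F) (T - s)) := by
      refine setLIntegral_congr_fun measurableSet_Ioo fun s hs => ?_
      exact ih (dp_fdiff_smooth hF s) (by linarith [hs.2])
    rw [this, lintegral_add_left (Finset.measurable_sum _
      (fun k _ => dpQ_meas k hF.continuous T))]
    ring

lemma dp_term {F : ℝ → ℝ} (hF : Continuous F) (n : ℕ) :
    simplexTerm F n = (dpQ n F 1).toReal := by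
  have hXm : Measurable (fun u : Fin n → ℝ => dpX 1 u) :=
    ((dpX_cont n).comp (by fun_prop : Continuous (fun u : Fin n → ℝ => ((1:ℝ), u)))).measurable
  have hS : MeasurableSet {u : Fin n → ℝ | dpX 1 u ∈ dpP n} := hXm (dpP_meas n)
  have hm : Measurable (fun u : Fin n → ℝ => (fdiffs (n + 1) (dpX 1 u) F 0) ^ 2 *
      (∏ i, dpX 1 u i)⁻¹) := by
    have : Measurable (fun x : Fin (n+1) → ℝ => (fdiffs (n + 1) x F 0) ^ 2 *
      (∏ i, x i)⁻¹) := by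
      refine Measurable.mul ?_ ?_
      · have h := dp_cont (n+1) hF
        have e2 : Continuous (fun p : (Fin (n+1) → ℝ) => (p, (0:ℝ))) := by fun_prop
        exact ((h.comp e2).pow 2).measurable
      · refine Measurable.inv ?_
        have : Continuous (fun p : (Fin (n+1) → ℝ) => ∏ i, p i) := by fun_prop
        exact this.measurable
    exact this.comp hXm
  change ∫ u in {u : Fin n → ℝ | dpX 1 u ∈ dpP n}, (fdiffs (n + 1) (dpX 1 u) F 0) ^ 2 *
      (∏ i, dpX 1 u i)⁻¹ = _
  rw [integral_eq_lintegral_of_nonneg_ae _ hm.aestronglyMeasurable]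
  · congr 1
    rw [← lintegral_indicator hS]
    rfl
  · refine (ae_restrict_iff' hS).2 (Eventually.of_forall fun u hu => ?_)
    have : 0 < ∏ i, dpX 1 u i := Finset.prod_pos fun i _ => dpP_pos hu i
    simp only [Pi.zero_apply]
    positivity

/-- **Polymath8b, identity (4.36)**: for smooth compactly supported `F : [0,∞) → ℝ`,
`∑_{r ≥ 1} ∫_{0 < t₁ < ⋯ < t_r, ∑ tᵢ = 1} |∂_{(t₁)} ⋯ ∂_{(t_r)} F(0)|²
  (dt₁ ⋯ dt_{r-1})/(t₁ ⋯ t_r) = ∫_0^1 |F'(t)|² dt`,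
the series converging (absolutely, as it is a sum of nonnegative terms). -/
theorem sum_simplexTerm_eq_integral_deriv_sq (F : ℝ → ℝ)
    (hF : ContDiff ℝ (⊤ : ℕ∞) F) (hsupp : HasCompactSupport F) :
    HasSum (fun n : ℕ => simplexTerm F n)
      (∫ t in Set.Icc (0 : ℝ) 1, (deriv F t) ^ 2) := by

  have hd' : ContDiff ℝ (⊤ : ℕ∞) (deriv F) := (contDiff_infty_iff_deriv.1 hF).2
  have hd'' : ContDiff ℝ (⊤ : ℕ∞) (deriv (deriv F)) := (contDiff_infty_iff_deriv.1 hd').2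
  have hf : Continuous (deriv F) := hd'.continuous
  obtain ⟨C, hC⟩ := (hd''.continuous_deriv (by simp)).bounded_above_of_compact_support
    hsupp.deriv.deriv.deriv
  have hC0 : 0 ≤ C := (norm_nonneg _).trans (hC 0)
  have hR : Tendsto (fun n => dpR n F 1) atTop (𝓝 0) := by
    rw [← tendsto_add_atTop_iff_nat 2]
    have h0 : Tendsto (fun n : ℕ => ENNReal.ofReal ((2/3)^n * (C^2 * 1^5))) atTop (𝓝 0) := by
      have : Tendsto (fun n : ℕ => ((2/3 : ℝ)^n * (C^2 * 1^5))) atTop (𝓝 (0 * (C^2 * 1^5))) :=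
        (_root_.tendsto_pow_atTop_nhds_zero_of_lt_one (by norm_num) (by norm_num)).mul_const _
      simpa using ENNReal.tendsto_ofReal this
    exact tendsto_of_tendsto_of_tendsto_of_le_of_le tendsto_const_nhds h0 (fun _ => zero_le)
      (fun n => dpRn n hF hC0 hC one_pos)
  have hE : dpE F 1 = ENNReal.ofReal (∫ t in Set.Icc (0 : ℝ) 1, (deriv F t) ^ 2) := by
    rw [integral_Icc_eq_integral_Ioc, ← intervalIntegral.integral_of_le zero_le_one]
    exact dp_lint (by fun_prop) (fun x => sq_nonneg _) zero_le_one
  have hsum : ∑' n, dpQ n F 1 = dpE F 1 := by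
    have a := (ENNReal.summable (f := fun n => dpQ n F 1)).hasSum.tendsto_sum_nat.add hR
    simp only [← dp_main _ hF one_pos, add_zero] at a
    exact tendsto_nhds_unique a tendsto_const_nhds
  have hfin : ∑' n, dpQ n F 1 ≠ ∞ := by rw [hsum, hE]; simp
  have h := ENNReal.hasSum_toReal hfin
  rw [← ENNReal.tsum_toReal_eq (fun n => ENNReal.ne_top_of_tsum_ne_top hfin n), hsum, hE,
    ENNReal.toReal_ofReal (integral_nonneg fun x => sq_nonneg _)] at h
  simpa only [dp_term hF.continuous] using h
end
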